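/- Let B be a brace containing a conformal bisubdivision of K_{3,3}, and let C be a cycle of length four in B. Then there exists a perfect matching M of B such that C is M-conformal and B contains an M-conformal bisubdivision of K_{3,3}. -/

import Mathlib

namespace Paper

open SimpleGraph

variable {V : Type*} {W : Type*}

/-- `M` is a perfect matching of the vertex set `S` in the graph `G`:
a set of pairwise disjoint edges of `G`, all within `S`, covering every vertex of `S`. -/
def IsPMOn (G : SimpleGraph V) (S : Set V) (M : Set (Sym2 V)) : Prop :=
  (∀ e ∈ M, e ∈ G.edgeSet) ∧ (∀ e ∈ M, ∀ v ∈ e, v ∈ S) ∧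
    ∀ v ∈ S, ∃! e, e ∈ M ∧ v ∈ e

/-- `M` is a perfect matching of `G`. -/
def IsPM (G : SimpleGraph V) (M : Set (Sym2 V)) : Prop :=
  IsPMOn G Set.univ M

/-- The edges in `F` are pairwise vertex-disjoint. -/
def PairwiseDisjointEdges (F : Set (Sym2 V)) : Prop :=
  ∀ e ∈ F, ∀ f ∈ F, e ≠ f → ∀ x : V, x ∈ e → x ∉ f

/-- All edges of `G` have both endpoints in `S`. -/
def EdgesWithin (G : SimpleGraph V) (S : Set V) : Prop :=
  ∀ ⦃x y : V⦄, G.Adj x y → x ∈ S ∧ y ∈ S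

def ConnectedOn (G : SimpleGraph V) (S : Set V) : Prop :=
  S.Nonempty ∧ ∀ x ∈ S, ∀ y ∈ S, G.Reachable x y

/-- The graph `G` with vertex set `S` is a brace: it is connected and every matching of
size at most two extends to a perfect matching. -/
def IsBraceOn (G : SimpleGraph V) (S : Set V) : Prop :=
  EdgesWithin G S ∧ ConnectedOn G S ∧
    ∀ F : Set (Sym2 V), F ⊆ G.edgeSet → PairwiseDisjointEdges F → F.ncard ≤ 2 →
      ∃ M, IsPMOn G S M ∧ F ⊆ M

def IsBrace (G : SimpleGraph V) : Prop :=
  IsBraceOn G Set.univ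

def IsBipartitionOf (G : SimpleGraph V) (V1 V2 : Set V) : Prop :=
  Disjoint V1 V2 ∧ V1 ∪ V2 = Set.univ ∧ ∀ ⦃x y : V⦄, G.Adj x y → (x ∈ V1 ↔ y ∈ V2)

def IsBipartite (G : SimpleGraph V) : Prop :=
  ∃ V1 V2 : Set V, IsBipartitionOf G V1 V2

def MatchingCoveredOn (G : SimpleGraph V) (S : Set V) : Prop :=
  EdgesWithin G S ∧ ConnectedOn G S ∧ ∀ e ∈ G.edgeSet, ∃ M, IsPMOn G S M ∧ e ∈ M

def MatchingCovered (G : SimpleGraph V) : Prop :=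
  MatchingCoveredOn G Set.univ

/-- Every vertex of `A` is covered exactly once by an edge of `M ∩ Es`;
i.e. `M ∩ Es` is a perfect matching of the subgraph with vertex set `A` and edge set `Es`. -/
def MatchesExactly (M Es : Set (Sym2 V)) (A : Set V) : Prop :=
  ∀ v ∈ A, ∃! e, e ∈ M ∧ e ∈ Es ∧ v ∈ e

/-- `M` restricted to the edges of `P` with both endpoints in `A` is a
perfect matching of `A`; i.e. `M ∩ E(P ∩ A)` is a perfect matching of `P ∩ A`. -/
def WalkMConfOn (G : SimpleGraph V) (M : Set (Sym2 V)) {u v : V} (P : G.Walk u v)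
    (A : Set V) : Prop :=
  ∀ x ∈ A, ∃! e : Sym2 V, e ∈ M ∧ e ∈ P.edges ∧ (∀ y ∈ e, y ∈ A) ∧ x ∈ e

/-- The path `P` is `M`-conformal: `M ∩ E(P)` is a perfect matching of `P`. -/
def MConformalWalk (G : SimpleGraph V) (M : Set (Sym2 V)) {u v : V} (P : G.Walk u v) : Prop :=
  WalkMConfOn G M P {x | x ∈ P.support}

/-- The path `P` is internally `M`-conformal: removing both endpoints leaves
an `M`-conformal path. -/
def InternallyMConformal (G : SimpleGraph V) (M : Set (Sym2 V)) {u v : V}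
    (P : G.Walk u v) : Prop :=
  WalkMConfOn G M P {x | x ∈ P.support ∧ x ≠ u ∧ x ≠ v}

/-- The path `P` is `M`-alternating: there is a set `S` of endpoints of `P`
such that `P − S` is `M`-conformal. -/
def MAlternating (G : SimpleGraph V) (M : Set (Sym2 V)) {u v : V} (P : G.Walk u v) : Prop :=
  ∃ S ⊆ ({u, v} : Set V), WalkMConfOn G M P {x | x ∈ P.support ∧ x ∉ S}

/-- The cycle `C` is `M`-conformal: `M ∩ E(C)` is a perfect matching of `C`. -/
def MConformalCycle (G : SimpleGraph V) (M : Set (Sym2 V)) {c : V} (C : G.Walk c c) : Prop :=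
  ∀ x ∈ C.support, ∃! e, e ∈ M ∧ e ∈ C.edges ∧ x ∈ e

/-- The cycle `C` is conformal in the graph `G` with vertex set `S`:
`G − V(C)` has a perfect matching. -/
def ConformalCycleOn (G : SimpleGraph V) (S : Set V) {c : V} (C : G.Walk c c) : Prop :=
  ∃ M, IsPMOn G (S \ {x | x ∈ C.support}) M

def ConformalCycle (G : SimpleGraph V) {c : V} (C : G.Walk c c) : Prop :=
  ConformalCycleOn G Set.univ C

/-- The four vertices appear on the cycle `C` in the listed cyclic order. -/
def InCyclicOrder (G : SimpleGraph V) {c : V} (C : G.Walk c c) (s1 s2 t1 t2 : V) : Prop :=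
  ∃ n : ℕ, List.Sublist [s1, s2, t1, t2] (C.support.tail.rotate n) ∨
    List.Sublist [s1, s2, t1, t2] (C.support.tail.reverse.rotate n)

/-- The paths `P1` (from `s1` to `t1`) and `P2` (from `s2` to `t2`) form a matching
cross over the cycle `C` with respect to the perfect matching `M` of `(G, S)`. -/
def IsMatchingCrossOn (G : SimpleGraph V) (S : Set V) {c s1 t1 s2 t2 : V}
    (C : G.Walk c c) (M : Set (Sym2 V)) (P1 : G.Walk s1 t1) (P2 : G.Walk s2 t2) : Prop :=
  IsPMOn G S M ∧ [s1, s2, t1, t2].Nodup ∧ InCyclicOrder G C s1 s2 t1 t2 ∧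
    P1.IsPath ∧ P2.IsPath ∧ MAlternating G M P1 ∧ MAlternating G M P2 ∧
    (∀ x : V, x ∈ P1.support → x ∉ P2.support) ∧
    (∀ x ∈ P1.support, x ≠ s1 → x ≠ t1 → x ∉ C.support) ∧
    (∀ x ∈ P2.support, x ≠ s2 → x ≠ t2 → x ∉ C.support)

def HasMatchingCrossOn (G : SimpleGraph V) (S : Set V) {c : V} (C : G.Walk c c) : Prop :=
  ∃ (M : Set (Sym2 V)) (s1 t1 s2 t2 : V) (P1 : G.Walk s1 t1) (P2 : G.Walk s2 t2),
    IsMatchingCrossOn G S C M P1 P2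

def HasMatchingCross (G : SimpleGraph V) {c : V} (C : G.Walk c c) : Prop :=
  HasMatchingCrossOn G Set.univ C

/-- `C + P1 + P2` is a conformal subgraph of `(G, S)`. -/
def CrossConformalOn (G : SimpleGraph V) (S : Set V) {c s1 t1 s2 t2 : V}
    (C : G.Walk c c) (P1 : G.Walk s1 t1) (P2 : G.Walk s2 t2) : Prop :=
  ∃ N, IsPMOn G S N ∧
    MatchesExactly N
      ({f | f ∈ C.edges} ∪ {f | f ∈ P1.edges} ∪ {f | f ∈ P2.edges})
      ({x | x ∈ C.support} ∪ {x | x ∈ P1.support} ∪ {x | x ∈ P2.support})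

/-- There is a conformal cross over the cycle `C` in `G`. -/
def HasConformalCross (G : SimpleGraph V) {c : V} (C : G.Walk c c) : Prop :=
  ∃ (M : Set (Sym2 V)) (s1 t1 s2 t2 : V) (P1 : G.Walk s1 t1) (P2 : G.Walk s2 t2),
    IsMatchingCrossOn G Set.univ C M P1 P2 ∧ CrossConformalOn G Set.univ C P1 P2

/-- A bisubdivision of the graph `H` inside the graph `G`: every edge of `H` is replaced
by a path of odd length (i.e., subdivided an even number of times), and those paths
pairwise meet only in branch vertices. -/
structure Bisubdivision (H : SimpleGraph W) (G : SimpleGraph V) where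
  bv : W → V
  bv_inj : Function.Injective bv
  link : ∀ ⦃x y : W⦄, H.Adj x y → G.Walk (bv x) (bv y)
  link_isPath : ∀ ⦃x y : W⦄ (h : H.Adj x y), (link h).IsPath
  link_odd : ∀ ⦃x y : W⦄ (h : H.Adj x y), Odd (link h).length
  link_symm : ∀ ⦃x y : W⦄ (h : H.Adj x y), link h.symm = (link h).reverse
  link_branch : ∀ ⦃x y : W⦄ (h : H.Adj x y) (z : W), bv z ∈ (link h).support → z = x ∨ z = y
  link_meet : ∀ ⦃x y x' y' : W⦄ (h : H.Adj x y) (h' : H.Adj x' y'), s(x, y) ≠ s(x', y') →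
    ∀ v : V, v ∈ (link h).support → v ∈ (link h').support →
      (v = bv x ∨ v = bv y) ∧ (v = bv x' ∨ v = bv y')

def Bisubdivision.verts {H : SimpleGraph W} {G : SimpleGraph V}
    (L : Bisubdivision H G) : Set V :=
  {v | ∃ (x y : W) (h : H.Adj x y), v ∈ (L.link h).support}

def Bisubdivision.edgeSet {H : SimpleGraph W} {G : SimpleGraph V}
    (L : Bisubdivision H G) : Set (Sym2 V) :=
  {e | ∃ (x y : W) (h : H.Adj x y), e ∈ (L.link h).edges}

/-- The bisubdivision `L` is an `M`-conformal subgraph of `G`. -/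
def Bisubdivision.MConformal {H : SimpleGraph W} {G : SimpleGraph V}
    (L : Bisubdivision H G) (M : Set (Sym2 V)) : Prop :=
  MatchesExactly M L.edgeSet L.verts

/-- The bisubdivision `L` is a conformal subgraph of `(G, S)`. -/
def Bisubdivision.ConformalOn {H : SimpleGraph W} {G : SimpleGraph V}
    (L : Bisubdivision H G) (S : Set V) : Prop :=
  ∃ M, IsPMOn G S M ∧ L.MConformal M

abbrev K33 : SimpleGraph (Fin 3 ⊕ Fin 3) := completeBipartiteGraph (Fin 3) (Fin 3)

/-- `G` contains a conformal bisubdivision of `K_{3,3}`. -/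
def ContainsK33 (G : SimpleGraph V) : Prop :=
  ∃ L : Bisubdivision K33 G, L.ConformalOn Set.univ

def K33Free (G : SimpleGraph V) : Prop :=
  ¬ ContainsK33 G

def C4verts (a1 b1 a2 b2 : V) : Set V := {a1, b1, a2, b2}

def C4edges (a1 b1 a2 b2 : V) : Set (Sym2 V) := {s(a1, b1), s(b1, a2), s(a2, b2), s(b2, a1)}

/-- `a1 b1 a2 b2` is a cycle of length four in `G`. -/
def IsC4In (G : SimpleGraph V) (a1 b1 a2 b2 : V) : Prop :=
  [a1, b1, a2, b2].Nodup ∧ G.Adj a1 b1 ∧ G.Adj b1 a2 ∧ G.Adj a2 b2 ∧ G.Adj b2 a1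

/-- `B` is a 4-cycle sum of the graphs `Bi i` (with vertex sets `Si i`)
at the common conformal 4-cycle `a1 b1 a2 b2`. -/
def IsFourCycleSum {ℓ : ℕ} (B : SimpleGraph V) (Bi : Fin ℓ → SimpleGraph V)
    (Si : Fin ℓ → Set V) (a1 b1 a2 b2 : V) : Prop :=
  (∀ i, EdgesWithin (Bi i) (Si i)) ∧
  (∀ i, IsC4In (Bi i) a1 b1 a2 b2) ∧
  (∀ i, ∃ M, IsPMOn (Bi i) (Si i \ C4verts a1 b1 a2 b2) M) ∧
  (∀ i j, i ≠ j → Si i ∩ Si j = C4verts a1 b1 a2 b2) ∧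
  (⋃ i, Si i) = Set.univ ∧
  ∃ D ⊆ C4edges a1 b1 a2 b2, B.edgeSet = (⋃ i, (Bi i).edgeSet) \ D

/-- `B` is a maximal 4-cycle sum of the braces `Bi i` at the 4-cycle `a1 b1 a2 b2`. -/
def IsMaxFourCycleSumOfBraces {ℓ : ℕ} (B : SimpleGraph V) (Bi : Fin ℓ → SimpleGraph V)
    (Si : Fin ℓ → Set V) (a1 b1 a2 b2 : V) : Prop :=
  IsFourCycleSum B Bi Si a1 b1 a2 b2 ∧ (∀ i, IsBraceOn (Bi i) (Si i)) ∧
    ¬ ∃ ℓ' : ℕ, ℓ < ℓ' ∧ ∃ (Hi : Fin ℓ' → SimpleGraph V) (Ti : Fin ℓ' → Set V),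
      IsFourCycleSum B Hi Ti a1 b1 a2 b2 ∧ ∀ i, IsBraceOn (Hi i) (Ti i)

/-- `∂(X)`: the set of edges of `G` with exactly one endpoint in `X`. -/
def edgeCut (G : SimpleGraph V) (X : Set V) : Set (Sym2 V) :=
  {e | e ∈ G.edgeSet ∧ ∃ x y : V, e = s(x, y) ∧ x ∈ X ∧ y ∉ X}

/-- `∂(X)` is a tight cut of the graph `G` with vertex set `S`. -/
def IsTightCutOn (G : SimpleGraph V) (S X : Set V) : Prop :=
  ∀ M, IsPMOn G S M → (edgeCut G X ∩ M).ncard = 1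

def IsTightCut (G : SimpleGraph V) (X : Set V) : Prop :=
  IsTightCutOn G Set.univ X

/-- The minority of `X` with respect to the colour classes `V1`, `V2`. -/
noncomputable def minority (V1 V2 X : Set V) : Set V :=
  if (X ∩ V1).ncard < (X ∩ V2).ncard then X ∩ V1 else X ∩ V2

/-- `P1` and `P2` are `M`-alternating paths of the same type. -/
def SameType (G : SimpleGraph V) (M : Set (Sym2 V)) {s1 t1 s2 t2 : V}
    (P1 : G.Walk s1 t1) (P2 : G.Walk s2 t2) : Prop :=
  (InternallyMConformal G M P1 ∧ InternallyMConformal G M P2) ∨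
  (MConformalWalk G M P1 ∧ MConformalWalk G M P2) ∨
  ((¬ InternallyMConformal G M P1 ∧ ¬ MConformalWalk G M P1) ∧
    (¬ InternallyMConformal G M P2 ∧ ¬ MConformalWalk G M P2))

/-- There is a strong matching cross over `C` in `(G, S)` w.r.t. colour classes `V1, V2`. -/
def HasStrongMatchingCrossOn (G : SimpleGraph V) (S V1 V2 : Set V) {c : V}
    (C : G.Walk c c) : Prop :=
  ∃ (M : Set (Sym2 V)) (s1 t1 s2 t2 : V) (P1 : G.Walk s1 t1) (P2 : G.Walk s2 t2),
    IsMatchingCrossOn G S C M P1 P2 ∧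
    (V1 ∩ {s1, s2, t1, t2}).ncard = (V2 ∩ {s1, s2, t1, t2}).ncard ∧
    SameType G M P1 P2

/-- `s1 s2 t1 t2` appear in this cyclic order on the 4-cycle `a1 b1 a2 b2`. -/
def CyclicOrderC4 (a1 b1 a2 b2 s1 s2 t1 t2 : V) : Prop :=
  ∃ n : ℕ, [s1, s2, t1, t2] = [a1, b1, a2, b2].rotate n ∨
    [s1, s2, t1, t2] = [b2, a2, b1, a1].rotate n

/-- `P1, P2` form a matching cross over the 4-cycle `a1 b1 a2 b2` w.r.t. `M`. -/
def IsCrossOverC4 (G : SimpleGraph V) (M : Set (Sym2 V)) (a1 b1 a2 b2 : V)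
    {s1 t1 s2 t2 : V} (P1 : G.Walk s1 t1) (P2 : G.Walk s2 t2) : Prop :=
  [s1, s2, t1, t2].Nodup ∧ CyclicOrderC4 a1 b1 a2 b2 s1 s2 t1 t2 ∧
    P1.IsPath ∧ P2.IsPath ∧ MAlternating G M P1 ∧ MAlternating G M P2 ∧
    (∀ z : V, z ∈ P1.support → z ∉ P2.support) ∧
    (∀ z ∈ P1.support, z ≠ s1 → z ≠ t1 → z ∉ C4verts a1 b1 a2 b2) ∧
    (∀ z ∈ P2.support, z ≠ s2 → z ≠ t2 → z ∉ C4verts a1 b1 a2 b2)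

/-- The Heawood graph on `ZMod 14`. -/
def heawood : SimpleGraph (ZMod 14) :=
  SimpleGraph.fromRel fun i j => j = i + 1 ∨ (Even i.val ∧ j = i + 5)

/-- The Rotunda: three cubes glued along a common 4-cycle whose edges are then deleted. -/
def rotunda : SimpleGraph (Fin 4 ⊕ Fin 3 × Fin 4) :=
  SimpleGraph.fromRel fun x y =>
    match x, y with
    | Sum.inl j, Sum.inr p => j = p.2
    | Sum.inr p, Sum.inr q => p.1 = q.1 ∧ q.2 = p.2 + 1
    | _, _ => False

/-- `F` is an `S`-cover in `G`. -/
def IsSCover (G : SimpleGraph V) (S : Set V) (F : Set (Sym2 V)) : Prop :=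
  F ⊆ G.edgeSet ∧ (∀ e ∈ F, ∃ v ∈ S, v ∈ e) ∧ ∀ v ∈ S, ∃ e ∈ F, v ∈ e

/-- `F` is contained in some perfect matching of `G`. -/
def Extendible (G : SimpleGraph V) (F : Set (Sym2 V)) : Prop :=
  ∃ M, IsPM G M ∧ F ⊆ M

/-- `(G, S)` is an `F`-instance of 2-MLP for `(a1, a2)` and `(b1, b2)`. -/
def TwoMLPInstanceOn (G : SimpleGraph V) (S : Set V) (a1 a2 b1 b2 : V)
    (F : Set (Sym2 V)) : Prop :=
  ∃ M, IsPMOn G S M ∧ F ⊆ M ∧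
    ∃ (P1 : G.Walk a1 b1) (P2 : G.Walk a2 b2), P1.IsPath ∧ P2.IsPath ∧
      InternallyMConformal G M P1 ∧ InternallyMConformal G M P2 ∧
      ∀ x : V, x ∈ P1.support → x ∉ P2.support

/-- `B − u − v + pq`: delete the vertices `u, v` and add the edge `pq`. -/
def deleteAdd (B : SimpleGraph V) (u v p q : V) : SimpleGraph V :=
  SimpleGraph.fromRel fun x y =>
    (B.Adj x y ∨ (x = p ∧ y = q)) ∧ x ≠ u ∧ x ≠ v ∧ y ≠ u ∧ y ≠ v

/-- `B` plus two new vertices `x = Sum.inr 0` and `y = Sum.inr 1` together with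
the edges `xy, x b1, x b2, y a1, y a2`. -/
def plusXY (B : SimpleGraph V) (a1 a2 b1 b2 : V) : SimpleGraph (V ⊕ Fin 2) :=
  SimpleGraph.fromRel fun p q =>
    (∃ a b : V, p = Sum.inl a ∧ q = Sum.inl b ∧ B.Adj a b) ∨
    (p = Sum.inr 0 ∧ q = Sum.inr 1) ∨
    (p = Sum.inr 0 ∧ (q = Sum.inl b1 ∨ q = Sum.inl b2)) ∨
    (p = Sum.inr 1 ∧ (q = Sum.inl a1 ∨ q = Sum.inl a2))

/-- The endpoints `q1, q2` (on the 4-cycle) belong to the same colour class. -/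
def PrecrossDaring (V1 V2 : Set V) (q1 q2 : V) : Prop :=
  (q1 ∈ V1 ∧ q2 ∈ V1) ∨ (q1 ∈ V2 ∧ q2 ∈ V2)

/-- `(P1, P2, Q, M)` is a diffuse `C'`-`M`-precross through the 4-cycle `a1 b1 a2 b2`
in the graph `G` with vertex set `S` and colour classes `V1, V2`. -/
def DiffusePrecross (G : SimpleGraph V) (S V1 V2 : Set V) (a1 b1 a2 b2 : V)
    {c p1 q1 p2 q2 x1 x2 : V} (C' : G.Walk c c) (M : Set (Sym2 V))
    (P1 : G.Walk p1 q1) (P2 : G.Walk p2 q2) (Q : G.Walk x1 x2) : Prop :=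
  IsPMOn G S M ∧ P1.IsPath ∧ P2.IsPath ∧ Q.IsPath ∧
  MAlternating G M P1 ∧ MAlternating G M P2 ∧ MAlternating G M Q ∧
  (∀ z : V, z ∈ P1.support → z ∉ P2.support) ∧
  (∀ z : V, z ∈ P1.support → z ∉ Q.support) ∧
  (∀ z : V, z ∈ P2.support → z ∉ Q.support) ∧
  (∀ z ∈ P1.support, z ≠ p1 → z ≠ q1 → z ∉ C'.support) ∧
  (∀ z ∈ P2.support, z ≠ p2 → z ≠ q2 → z ∉ C'.support) ∧
  (∀ z ∈ Q.support, z ≠ x1 → z ≠ x2 → z ∉ C'.support) ∧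
  x1 ∈ C'.support ∧ x2 ∈ C'.support ∧
  p1 ∈ C'.support ∧ q1 ∈ C4verts a1 b1 a2 b2 ∧
  p2 ∈ C'.support ∧ q2 ∈ C4verts a1 b1 a2 b2 ∧
  (∀ Wk : G.Walk p1 p2, (∀ e ∈ Wk.edges, e ∈ C'.edges) → ∃ z ∈ Wk.support, z ∈ Q.support) ∧
  (∀ U ∈ ({V1, V2} : Set (Set V)), (q1 ∈ U ∨ q2 ∈ U) →
    ∃ q : V, (q = q1 ∨ q = q2) ∧ q ∈ U ∧ ∃ e ∈ M, e ∈ C4edges a1 b1 a2 b2 ∧ q ∈ e)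

/-- A daring diffuse precross is successful. -/
def PrecrossSuccessful (G : SimpleGraph V) (V1 V2 : Set V) (M : Set (Sym2 V))
    {p1 q1 p2 q2 : V} (P1 : G.Walk p1 q1) (P2 : G.Walk p2 q2) : Prop :=
  PrecrossDaring V1 V2 q1 q2 ∧
  ((InternallyMConformal G M P1 ∧ MConformalWalk G M P2) ∨
   (InternallyMConformal G M P2 ∧ MConformalWalk G M P1) ∨
   (Even P1.length ∧ Even P2.length ∧
     ((∃ e ∈ M, e ∈ P1.edges ∧ p1 ∈ e) ↔ ¬ ∃ e ∈ M, e ∈ P2.edges ∧ p2 ∈ e)))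

end Paper

namespace Paper
namespace K

variable {V : Type*}

/-- Edges at even positions of a list (disjoint consecutive pairs). -/
def pr : List V → Multiset (Sym2 V)
  | x :: y :: l => s(x, y) ::ₘ pr l
  | _ => 0

/-- All consecutive edges of a list. -/
def we : List V → Multiset (Sym2 V)
  | x :: y :: l => s(x, y) ::ₘ we (y :: l)
  | _ => 0

/-- Vertices of a multiset of edges. -/
def nv (N : Multiset (Sym2 V)) : Multiset V := (N.map Sym2.toMultiset).sum

@[simp] lemma pr_nil : pr ([] : List V) = 0 := by simp [pr]
@[simp] lemma pr_single (x : V) : pr [x] = 0 := by simp [pr]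
@[simp] lemma pr_cons2 (x y : V) (l : List V) : pr (x :: y :: l) = s(x, y) ::ₘ pr l := by
  simp [pr]
@[simp] lemma we_nil : we ([] : List V) = 0 := by simp [we]
@[simp] lemma we_single (x : V) : we [x] = 0 := by simp [we]
@[simp] lemma we_cons2 (x y : V) (l : List V) : we (x :: y :: l) = s(x, y) ::ₘ we (y :: l) := by
  simp [we]

@[simp] lemma nv_zero : nv (0 : Multiset (Sym2 V)) = 0 := by simp [nv]
@[simp] lemma nv_add (A B : Multiset (Sym2 V)) : nv (A + B) = nv A + nv B := by simp [nv]
@[simp] lemma nv_cons (x y : V) (B : Multiset (Sym2 V)) :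
    nv (s(x, y) ::ₘ B) = x ::ₘ y ::ₘ nv B := by
  simp only [nv, Multiset.map_cons, Multiset.sum_cons]
  have : Sym2.toMultiset s(x, y) = {x, y} := rfl
  rw [this]; simp [Multiset.insert_eq_cons]

lemma mem_nv {N : Multiset (Sym2 V)} {v : V} : v ∈ nv N ↔ ∃ e ∈ N, v ∈ e := by
  induction N using Multiset.induction with
  | empty => simp
  | cons e N ih =>
    induction e with
    | _ x y => simp [ih, or_assoc]

lemma even_ind {P : List V → Prop} (h0 : P []) (h2 : ∀ x y l, Even l.length → P l → P (x :: y :: l)) :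
    ∀ l : List V, Even l.length → P l
  | [], _ => h0
  | [x], h => by simp at h
  | x :: y :: l, h => by
    have h' : Even l.length := by
      simp only [List.length_cons] at h
      grind
    exact h2 x y l h' (even_ind h0 h2 l h')

lemma nv_pr (l : List V) (h : Even l.length) : nv (pr l) = (l : Multiset V) := by
  refine even_ind (P := fun l => nv (pr l) = (l : Multiset V)) ?_ ?_ l h
  · simp
  · intro x y l _ ih; simp [ih]

lemma pr_append (p q : List V) (h : Even p.length) : pr (p ++ q) = pr p + pr q := by
  refine even_ind (P := fun p => pr (p ++ q) = pr p + pr q) ?_ ?_ p h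
  · simp
  · intro x y l _ ih; simp [ih]

lemma pr_reverse (l : List V) (h : Even l.length) : pr l.reverse = pr l := by
  refine even_ind (P := fun l => pr l.reverse = pr l) ?_ ?_ l h
  · simp
  · intro x y l hl ih
    have : (x :: y :: l).reverse = l.reverse ++ [y, x] := by simp
    rw [this, pr_append _ _ (by simpa using hl), ih, pr_cons2, pr_cons2, pr_nil,
      Sym2.eq_swap, Multiset.add_cons, add_zero]

lemma we_append (p q : List V) (x : V) : we (p ++ x :: q) = we (p ++ [x]) + we (x :: q) := by
  induction p with
  | nil => simp
  | cons y p ih =>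
    cases p with
    | nil => simp
    | cons z p => simpa using ih

lemma we_reverse (l : List V) : we l.reverse = we l := by
  induction l with
  | nil => simp
  | cons x l ih =>
    cases l with
    | nil => simp
    | cons y l =>
      have : (x :: y :: l).reverse = l.reverse ++ y :: [x] := by simp
      rw [this, we_append]
      have h2 : l.reverse ++ [y] = (y :: l).reverse := by simp
      rw [h2, ih]; simp [Sym2.eq_swap, add_comm]

lemma we_eq (x y : V) (l : List V) (h : Even l.length) :
    we (x :: (l ++ [y])) = pr (x :: (l ++ [y])) + pr l := by
  refine even_ind (P := fun l => ∀ x, we (x :: (l ++ [y])) = pr (x :: (l ++ [y])) + pr l)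
    ?_ ?_ l h x
  · simp
  · intro x y' l _ ih z
    simp only [List.cons_append, we_cons2, ih, pr_cons2, Multiset.cons_add, Multiset.add_cons]
    rw [Multiset.cons_swap]

lemma mem_pr {l : List V} {e : Sym2 V} :
    e ∈ pr l ↔ ∃ p x y q, l = p ++ x :: y :: q ∧ Even p.length ∧ e = s(x, y) := by
  constructor
  · intro h
    induction l using pr.induct with
    | case1 x y l ih =>
      rw [pr_cons2, Multiset.mem_cons] at h
      rcases h with h | h
      · exact ⟨[], x, y, l, rfl, by simp, h⟩
      · obtain ⟨p, x', y', q, rfl, hp, he⟩ := ih h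
        exact ⟨x :: y :: p, x', y', q, rfl, by simpa [Nat.even_add_one] using hp, he⟩
    | case2 l hl => 
      rw [pr] at h
      · simp at h
      · exact hl
  · rintro ⟨p, x, y, q, rfl, hp, rfl⟩
    rw [pr_append _ _ hp]; simp

lemma mem_we {l : List V} {e : Sym2 V} :
    e ∈ we l ↔ ∃ p x y q, l = p ++ x :: y :: q ∧ e = s(x, y) := by
  constructor
  · intro h
    induction l using we.induct with
    | case1 x y l ih =>
      rw [we_cons2, Multiset.mem_cons] at h
      rcases h with h | h
      · exact ⟨[], x, y, l, rfl, h⟩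
      · obtain ⟨p, x', y', q, he, he'⟩ := ih h
        exact ⟨x :: p, x', y', q, by rw [he]; rfl, he'⟩
    | case2 l hl => 
      rw [we] at h
      · simp at h
      · exact hl
  · rintro ⟨p, x, y, q, rfl, rfl⟩
    rw [we_append]; simp

lemma mem_of_we {l : List V} {x : V} {e : Sym2 V} (h : e ∈ we l) (hx : x ∈ e) : x ∈ l := by
  obtain ⟨p, a, b, q, rfl, rfl⟩ := mem_we.1 h
  simp at hx ⊢; tauto

lemma pr_le_we (l : List V) {e} (h : e ∈ pr l) : e ∈ we l := by
  obtain ⟨p, x, y, q, rfl, _, rfl⟩ := mem_pr.1 h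
  exact mem_we.2 ⟨_, _, _, _, rfl, rfl⟩

lemma mem_of_pr {l : List V} {x : V} {e : Sym2 V} (h : e ∈ pr l) (hx : x ∈ e) : x ∈ l :=
  mem_of_we (pr_le_we _ h) hx

/-- Global environment: bipartite graph with colouring `c` and a perfect matching given by `m`. -/
structure Env (G : SimpleGraph V) (c : V → Bool) (m : V → V) : Prop where
  col : ∀ x y, G.Adj x y → c x = !c y
  inv : ∀ x, m (m x) = x
  adj : ∀ x, G.Adj x (m x)

lemma Env.tr {G : SimpleGraph V} {c : V → Bool} {m : V → V} (E : Env G c m) :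
    Env G (fun x => !c x) m :=
  ⟨fun x y h => by rw [E.col x y h], E.inv, E.adj⟩

def isM (m : V → V) (e : Sym2 V) : Prop := ∃ x, e = s(x, m x)

lemma Env.isM_mk {G : SimpleGraph V} {c : V → Bool} {m : V → V} (E : Env G c m) {x y : V} :
    isM m s(x, y) ↔ y = m x := by
  constructor
  · rintro ⟨z, hz⟩
    rw [Sym2.eq_iff] at hz
    rcases hz with ⟨rfl, rfl⟩ | ⟨rfl, rfl⟩
    · rfl
    · rw [E.inv]
  · rintro rfl; exact ⟨x, rfl⟩

lemma Env.isM_adj {G : SimpleGraph V} {c : V → Bool} {m : V → V} (E : Env G c m) {e : Sym2 V}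
    (h : isM m e) : e ∈ G.edgeSet := by
  obtain ⟨x, rfl⟩ := h
  exact E.adj x

lemma Env.isM_eq {G : SimpleGraph V} {c : V → Bool} {m : V → V} (E : Env G c m) {e : Sym2 V}
    (h : isM m e) {x : V} (hx : x ∈ e) : e = s(x, m x) := by
  induction e with
  | _ a b =>
    rw [E.isM_mk] at h; subst h
    rw [Sym2.mem_iff] at hx
    rcases hx with rfl | rfl
    · rfl
    · rw [E.inv, Sym2.eq_swap]

lemma Env.mcol {G : SimpleGraph V} {c : V → Bool} {m : V → V} (E : Env G c m) (x : V) :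
    c (m x) = !c x := by
  rw [E.col x (m x) (E.adj x)]; simp

lemma Env.par {G : SimpleGraph V} {c : V → Bool} {m : V → V} (E : Env G c m) :
    ∀ (l : List V) (x y : V), (∀ e ∈ we (x :: (l ++ [y])), e ∈ G.edgeSet) →
      (c x = c y ↔ Odd l.length)
  | [], x, y, h => by
    have := E.col x y (by simpa using h)
    simp [this]
  | z :: l, x, y, h => by
    simp only [List.cons_append, we_cons2, Multiset.mem_cons, forall_eq_or_imp] at h
    have h1 := E.col x z (by simpa using h.1)
    have h2 := Env.par E l z y h.2
    rw [List.length_cons, Nat.odd_add_one, ← h2, h1]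
    cases c z <;> cases c y <;> simp

end K
end Paper

namespace Paper
namespace K
open Classical

variable {V : Type*}

structure Cfg (V : Type*) where
  a : Fin 3 → V
  b : Fin 3 → V
  Q : Fin 3 → Fin 3 → List V
  N : Multiset (Sym2 V)

namespace Cfg

def full (L : Cfg V) (i j : Fin 3) : List V := L.a i :: (L.Q i j ++ [L.b j])

def VT (L : Cfg V) : Multiset V :=
  (∑ i, ({L.a i} : Multiset V)) + (∑ j, ({L.b j} : Multiset V)) +
    (∑ i, ∑ j, (L.Q i j : Multiset V)) + nv L.N

def TE (L : Cfg V) : Multiset (Sym2 V) := (∑ i, ∑ j, we (L.full i j)) + L.N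

def rl (L : Cfg V) (σ τ : Equiv.Perm (Fin 3)) : Cfg V :=
  ⟨fun i => L.a (σ i), fun j => L.b (τ j), fun i j => L.Q (σ i) (τ j), L.N⟩

def tr (L : Cfg V) : Cfg V := ⟨L.b, L.a, fun i j => (L.Q j i).reverse, L.N⟩

@[simp] lemma rl_full (L : Cfg V) (σ τ : Equiv.Perm (Fin 3)) (i j) :
    (L.rl σ τ).full i j = L.full (σ i) (τ j) := rfl

@[simp] lemma tr_full (L : Cfg V) (i j) : L.tr.full i j = (L.full j i).reverse := by
  simp [full, tr]

@[simp] lemma rl_VT (L : Cfg V) (σ τ : Equiv.Perm (Fin 3)) : (L.rl σ τ).VT = L.VT := by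
  simp only [VT, rl]
  rw [Equiv.sum_comp σ (fun i => ({L.a i} : Multiset V)),
    Equiv.sum_comp τ (fun i => ({L.b i} : Multiset V)),
    Equiv.sum_comp σ (fun i => ∑ j, (L.Q i (τ j) : Multiset V))]
  congr 2
  exact Finset.sum_congr rfl fun i _ => Equiv.sum_comp τ (fun j => (L.Q i j : Multiset V))

@[simp] lemma rl_TE (L : Cfg V) (σ τ : Equiv.Perm (Fin 3)) : (L.rl σ τ).TE = L.TE := by
  simp only [TE, rl_full]
  rw [Equiv.sum_comp σ (fun i => ∑ j, we (L.full i (τ j)))]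
  congr 1
  exact Finset.sum_congr rfl fun i _ => Equiv.sum_comp τ (fun j => we (L.full i j))

@[simp] lemma rl_N (L : Cfg V) (σ τ : Equiv.Perm (Fin 3)) : (L.rl σ τ).N = L.N := rfl
@[simp] lemma tr_N (L : Cfg V) : L.tr.N = L.N := rfl

@[simp] lemma tr_VT (L : Cfg V) : L.tr.VT = L.VT := by
  simp only [VT, tr, Multiset.coe_reverse]
  rw [Finset.sum_comm, add_comm (∑ i, ({L.b i} : Multiset V))]

@[simp] lemma tr_TE (L : Cfg V) : L.tr.TE = L.TE := by
  simp only [TE, tr_full, we_reverse]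
  rw [Finset.sum_comm]; rfl

abbrev Tag := Fin 3 ⊕ Fin 3 ⊕ (Fin 3 × Fin 3) ⊕ Unit

def part (L : Cfg V) : Tag → Multiset V
  | .inl i => {L.a i}
  | .inr (.inl j) => {L.b j}
  | .inr (.inr (.inl p)) => (L.Q p.1 p.2 : Multiset V)
  | .inr (.inr (.inr _)) => nv L.N

lemma VT_eq (L : Cfg V) : L.VT = ∑ t, L.part t := by
  simp [VT, part, Fintype.sum_sum_type, Fintype.sum_prod_type, add_assoc]

structure Ok (G : SimpleGraph V) (L : Cfg V) : Prop where
  nodup : L.VT.Nodup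
  all : ∀ v, v ∈ L.VT
  ev : ∀ i j, Even (L.Q i j).length
  adj : ∀ e ∈ L.TE, e ∈ G.edgeSet

variable {G : SimpleGraph V} {L : Cfg V}

lemma Ok.rl (h : L.Ok G) (σ τ) : (L.rl σ τ).Ok G :=
  ⟨by simpa using h.nodup, by simpa using h.all, fun i j => h.ev _ _, by simpa using h.adj⟩

lemma Ok.tr (h : L.Ok G) : L.tr.Ok G :=
  ⟨by simpa using h.nodup, by simpa using h.all, fun i j => by simpa [Cfg.tr] using h.ev _ _,
    by simpa using h.adj⟩

lemma Ok.tag_ex (h : L.Ok G) (v : V) : ∃ t, v ∈ L.part t := by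
  have := h.all v
  rw [VT_eq, Multiset.mem_sum] at this
  obtain ⟨t, _, ht⟩ := this
  exact ⟨t, ht⟩

lemma Ok.tag_eq (h : L.Ok G) {v : V} {t t'} (ht : v ∈ L.part t) (ht' : v ∈ L.part t') :
    t = t' := by
  by_contra hne
  have h1 := Multiset.nodup_iff_count_le_one.1 h.nodup v
  rw [VT_eq, Multiset.count_sum'] at h1
  have h2 : ∑ x ∈ ({t, t'} : Finset Tag), Multiset.count v (L.part x) ≤
      ∑ x, Multiset.count v (L.part x) :=
    Finset.sum_le_sum_of_subset (Finset.subset_univ _)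
  rw [Finset.sum_pair hne] at h2
  have h3 := Multiset.one_le_count_iff_mem.2 ht
  have h4 := Multiset.one_le_count_iff_mem.2 ht'
  omega

lemma Ok.part_nodup (h : L.Ok G) (t) : (L.part t).Nodup := by
  refine Multiset.nodup_of_le ?_ h.nodup
  rw [VT_eq]
  exact Finset.single_le_sum (fun i _ => Multiset.zero_le (L.part i)) (Finset.mem_univ t)

lemma Ok.cases (h : L.Ok G) (v : V) :
    (∃ i, v = L.a i) ∨ (∃ j, v = L.b j) ∨ (∃ i j, v ∈ L.Q i j) ∨ v ∈ nv L.N := by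
  obtain ⟨t, ht⟩ := h.tag_ex v
  rcases t with i | j | ⟨i, j⟩ | _
  · exact Or.inl ⟨i, by simpa [part] using ht⟩
  · exact Or.inr (Or.inl ⟨j, by simpa [part] using ht⟩)
  · exact Or.inr (Or.inr (Or.inl ⟨i, j, by simpa [part] using ht⟩))
  · exact Or.inr (Or.inr (Or.inr (by simpa [part] using ht)))

lemma mem_a (i : Fin 3) : L.a i ∈ L.part (.inl i) := by simp [part]
lemma mem_b (i : Fin 3) : L.b i ∈ L.part (.inr (.inl i)) := by simp [part]
lemma mem_Q {i j : Fin 3} {v} (h : v ∈ L.Q i j) : v ∈ L.part (.inr (.inr (.inl (i, j)))) := by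
  simpa [part] using h
lemma mem_N {v} (h : v ∈ nv L.N) : v ∈ L.part (.inr (.inr (.inr ()))) := by
  simpa [part] using h

lemma Ok.a_inj (h : L.Ok G) {i j} (e : L.a i = L.a j) : i = j := by
  have := h.tag_eq (mem_a i) (e ▸ mem_a j); simpa using this
lemma Ok.b_inj (h : L.Ok G) {i j} (e : L.b i = L.b j) : i = j := by
  have := h.tag_eq (mem_b i) (e ▸ mem_b j); simpa using this
lemma Ok.a_ne_b (h : L.Ok G) {i j} : L.a i ≠ L.b j := fun e => by
  have := h.tag_eq (mem_a i) (e ▸ mem_b j); simp at this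
lemma Ok.a_nQ (h : L.Ok G) {i j k} : L.a i ∉ L.Q j k := fun e => by
  have := h.tag_eq (mem_a i) (mem_Q e); simp at this
lemma Ok.b_nQ (h : L.Ok G) {i j k} : L.b i ∉ L.Q j k := fun e => by
  have := h.tag_eq (mem_b i) (mem_Q e); simp at this
lemma Ok.a_nN (h : L.Ok G) {i} : L.a i ∉ nv L.N := fun e => by
  have := h.tag_eq (mem_a i) (mem_N e); simp at this
lemma Ok.b_nN (h : L.Ok G) {i} : L.b i ∉ nv L.N := fun e => by
  have := h.tag_eq (mem_b i) (mem_N e); simp at this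
lemma Ok.Q_nN (h : L.Ok G) {i j v} (hv : v ∈ L.Q i j) : v ∉ nv L.N := fun e => by
  have := h.tag_eq (mem_Q hv) (mem_N e); simp at this
lemma Ok.Q_inj (h : L.Ok G) {i j k l v} (hv : v ∈ L.Q i j) (hv' : v ∈ L.Q k l) :
    i = k ∧ j = l := by
  have := h.tag_eq (mem_Q hv) (mem_Q hv'); simpa using this
lemma Ok.Q_nodup (h : L.Ok G) (i j) : (L.Q i j).Nodup := by
  simpa [part] using h.part_nodup (.inr (.inr (.inl (i, j))))
lemma Ok.full_nodup (h : L.Ok G) (i j) : (L.full i j).Nodup := by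
  have h1 := h.Q_nodup i j
  have h2 := h.a_nQ (i := i) (j := i) (k := j)
  have h3 := h.b_nQ (i := j) (j := i) (k := j)
  have h4 := h.a_ne_b (i := i) (j := j)
  rw [full, List.nodup_cons, List.nodup_append]
  simp_all
  intro a ha hh; subst hh; exact h3 ha

lemma mem_full {i j v} : v ∈ L.full i j ↔ v = L.a i ∨ v ∈ L.Q i j ∨ v = L.b j := by
  simp [full]

lemma Ok.full_nN (h : L.Ok G) {i j v} (hv : v ∈ L.full i j) : v ∉ nv L.N := by
  rw [mem_full] at hv
  rcases hv with rfl | hv | rfl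
  · exact h.a_nN
  · exact h.Q_nN hv
  · exact h.b_nN

lemma Ok.Q_full (h : L.Ok G) {i j k l v} (hv : v ∈ L.Q i j) (hv' : v ∈ L.full k l) :
    i = k ∧ j = l := by
  rw [mem_full] at hv'
  rcases hv' with rfl | hv' | rfl
  · exact (h.a_nQ hv).elim
  · exact h.Q_inj hv hv'
  · exact (h.b_nQ hv).elim

lemma Ok.a_full (h : L.Ok G) {i k l} (hv' : L.a i ∈ L.full k l) : i = k := by
  rw [mem_full] at hv'
  rcases hv' with e | hv' | e
  · exact h.a_inj e
  · exact (h.a_nQ hv').elim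
  · exact (h.a_ne_b e).elim

lemma Ok.b_full (h : L.Ok G) {j k l} (hv' : L.b j ∈ L.full k l) : j = l := by
  rw [mem_full] at hv'
  rcases hv' with e | hv' | e
  · exact (h.a_ne_b e.symm).elim
  · exact (h.b_nQ hv').elim
  · exact h.b_inj e

lemma mem_TE {e} : e ∈ L.TE ↔ (∃ i j, e ∈ we (L.full i j)) ∨ e ∈ L.N := by
  simp [TE, Multiset.mem_sum]

lemma Ok.full_adj (h : L.Ok G) (i j) : ∀ e ∈ we (L.full i j), e ∈ G.edgeSet :=
  fun e he => h.adj e (mem_TE.2 (Or.inl ⟨i, j, he⟩))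

structure Col (c : V → Bool) (L : Cfg V) : Prop where
  a : ∀ i, c (L.a i) = true
  b : ∀ i, c (L.b i) = false

lemma Col.rl {c : V → Bool} (h : L.Col c) (σ τ) : (L.rl σ τ).Col c :=
  ⟨fun _ => h.a _, fun _ => h.b _⟩
lemma Col.tr {c : V → Bool} (h : L.Col c) : L.tr.Col (fun x => !c x) :=
  ⟨fun i => by simp [Cfg.tr, h.b], fun i => by simp [Cfg.tr, h.a]⟩

end Cfg

noncomputable def cost (m : V → V) (N : Multiset (Sym2 V)) : ℕ := N.countP (fun e => ¬ isM m e)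

lemma cost_add (m : V → V) (A B) : cost m (A + B) = cost m A + cost m B := by simp [cost]

lemma cost_zero {m : V → V} {A} : cost m A = 0 ↔ ∀ e ∈ A, isM m e := by
  simp [cost, Multiset.countP_eq_zero]

structure Min (G : SimpleGraph V) (m : V → V) (L : Cfg V) : Prop where
  ok : L.Ok G
  le : ∀ L' : Cfg V, L'.Ok G → cost m L.TE ≤ cost m L'.TE

lemma Min.rl {G : SimpleGraph V} {m : V → V} {L : Cfg V} (h : Min G m L) (σ τ) :
    Min G m (L.rl σ τ) := ⟨h.ok.rl σ τ, by simpa using h.le⟩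
lemma Min.tr {G : SimpleGraph V} {m : V → V} {L : Cfg V} (h : Min G m L) :
    Min G m L.tr := ⟨h.ok.tr, by simpa using h.le⟩

lemma Min.exists {G : SimpleGraph V} (m : V → V) {L : Cfg V} (h : L.Ok G) :
    ∃ L', Min G m L' := by
  obtain ⟨L', hL', hle⟩ := exists_minimalFor_of_wellFoundedLT (fun L : Cfg V => L.Ok G)
    (fun L => cost m L.TE) ⟨L, h⟩
  refine ⟨L', hL', fun L'' h'' => ?_⟩
  by_contra hlt
  push Not at hlt
  have := hle h'' hlt.le
  simp at this
  omega

structure Ear (c : V → Bool) (m : V → V) (L : Cfg V) (u : V) (R : List V) (v : V)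
    (N0 : Multiset (Sym2 V)) : Prop where
  cu : c u = true
  cv : c v = false
  hu : u ∉ nv L.N
  hv : v ∉ nv L.N
  ev : Even R.length
  hN : L.N = pr R + N0
  inM : ∀ e ∈ pr (u :: (R ++ [v])), isM m e
  nt : ∀ e ∈ pr (u :: (R ++ [v])), e ∉ L.TE

section
variable {G : SimpleGraph V} {c : V → Bool} {m : V → V} {L L' : Cfg V} {u v : V} {R S : List V}
  {N0 P D : Multiset (Sym2 V)}

lemma pr_ear_rev (hR : Even R.length) : pr (v :: (R.reverse ++ [u])) = pr (u :: (R ++ [v])) := by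
  rw [← pr_reverse (u :: (R ++ [v]))]
  · simp
  · simp; grind

lemma Ear.rl (h : Ear c m L u R v N0) (σ τ) : Ear c m (L.rl σ τ) u R v N0 :=
  ⟨h.cu, h.cv, by simpa using h.hu, by simpa using h.hv, h.ev, by simpa using h.hN, h.inM,
    by simpa using h.nt⟩

lemma Ear.tr (h : Ear c m L u R v N0) : Ear (fun x => !c x) m L.tr v R.reverse u N0 := by
  have hR := pr_ear_rev (u := u) (v := v) h.ev
  exact ⟨by simp [h.cv], by simp [h.cu], by simpa using h.hv, by simpa using h.hu,
    by simpa using h.ev, by simpa [pr_reverse _ h.ev] using h.hN, by rw [hR]; exact h.inM,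
    by rw [hR]; simpa using h.nt⟩

lemma pr_head {l : List V} (h : l ≠ []) : ∃ y, s(u, y) ∈ pr (u :: l) := by
  cases l with
  | nil => simp at h
  | cons y l => exact ⟨y, by simp⟩

lemma Ear.mu (E : Env G c m) (h : Ear c m L u R v N0) : s(u, m u) ∈ pr (u :: (R ++ [v])) := by
  obtain ⟨y, hy⟩ := pr_head (u := u) (l := R ++ [v]) (by simp)
  rwa [E.isM_mk.1 (h.inM _ hy)] at hy

lemma Ear.mv (E : Env G c m) (h : Ear c m L u R v N0) : s(v, m v) ∈ pr (u :: (R ++ [v])) := by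
  rw [← pr_ear_rev h.ev]
  exact Ear.mu E.tr h.tr

/-- result of an exchange -/
structure Step (L L' : Cfg V) (P : Multiset (Sym2 V)) (S : List V) (N0 D : Multiset (Sym2 V)) :
    Prop where
  VT : L'.VT = L.VT
  TE : L'.TE + D = L.TE + P
  N : L'.N = N0 + pr S
  ev : ∀ i j, Even (L'.Q i j).length

lemma Step.ok (E : Env G c m) (h : Step L L' P S N0 D) (hL : L.Ok G) (hP : ∀ e ∈ P, isM m e) :
    L'.Ok G := by
  refine ⟨h.VT ▸ hL.nodup, h.VT ▸ hL.all, h.ev, fun e he => ?_⟩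
  have : e ∈ L'.TE + D := Multiset.mem_add.2 (Or.inl he)
  rw [h.TE, Multiset.mem_add] at this
  exact this.elim (hL.adj e) (fun h => E.isM_adj (hP e h))

lemma Step.min (E : Env G c m) (h : Step L L' P S N0 D) (hL : Min G m L)
    (hP : ∀ e ∈ P, isM m e) : Min G m L' ∧ ∀ e ∈ D, isM m e := by
  have ok := h.ok E hL.ok hP
  have h1 := hL.le L' ok
  have h2 := congrArg (cost m) h.TE
  rw [cost_add, cost_add, cost_zero.2 hP] at h2
  refine ⟨⟨ok, fun L'' h'' => ?_⟩, cost_zero.1 (by omega)⟩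
  have := hL.le L'' h''
  omega

lemma Step.prog (E : Env G c m) (hL : Min G m L) (hE : Ear c m L u R v N0)
    (h : Step L L' (pr (u :: (R ++ [v]))) S N0 D) (hD : ∀ e ∈ D, e ∈ L.TE)
    {z w : V} (hz : s(z, w) ∈ D) (hz' : z = u ∨ z = v) : False := by
  have h1 := (h.min E hL hE.inM).2 _ hz
  rw [E.isM_mk] at h1
  subst h1
  refine hE.nt _ ?_ (hD _ hz)
  rcases hz' with rfl | rfl
  · exact hE.mu E
  · exact hE.mv E

end

end K
end Paper

namespace Paper
namespace K
open Classical

variable {V : Type*}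

section
variable {G : SimpleGraph V} {c : V → Bool} {m : V → V} {L L' : Cfg V} {u v : V} {R S : List V}
  {N0 P D : Multiset (Sym2 V)}

lemma refill {a b z1 z2 : V} {Q p S q : List V} (h : a :: (Q ++ [b]) = p ++ z1 :: (S ++ z2 :: q))
    (R : List V) : ∃ Q', a :: (Q' ++ [b]) = p ++ z1 :: (R ++ z2 :: q) := by
  have hb : (q = [] ∧ z2 = b) ∨ ∃ q', q = q' ++ [b] := by
    rcases List.eq_nil_or_concat q with rfl | ⟨q', x, rfl⟩
    · left
      have := congrArg List.getLast? h
      simpa [List.getLast?_append, List.getLast?_cons, eq_comm] using this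
    · right
      have := congrArg List.getLast? h
      exact ⟨q', by simp [List.getLast?_append, List.getLast?_cons] at this; simp [this]⟩
  rcases p with _ | ⟨x, p⟩
  · simp only [List.nil_append, List.cons.injEq] at h ⊢
    rcases hb with ⟨rfl, rfl⟩ | ⟨q', rfl⟩
    · exact ⟨R, h.1, rfl⟩
    · exact ⟨R ++ z2 :: q', h.1, by simp⟩
  · simp only [List.cons_append, List.cons.injEq] at h ⊢
    rcases hb with ⟨rfl, rfl⟩ | ⟨q', rfl⟩
    · exact ⟨p ++ z1 :: R, h.1, by simp⟩
    · exact ⟨p ++ z1 :: (R ++ z2 :: q'), h.1, by simp⟩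

lemma we_mid (p q S : List V) (x y : V) :
    we (p ++ x :: (S ++ y :: q)) = we (p ++ [x]) + we (x :: (S ++ [y])) + we (y :: q) := by
  rw [we_append, ← List.cons_append, we_append (x :: S), add_assoc, List.cons_append]

lemma X12 (hok : ∀ i j, Even (L.Q i j).length) (hR : Even R.length) (hN : L.N = pr R + N0)
    {p q : List V} {z1 z2 : V} (hS : Even S.length)
    (hf : L.full 0 0 = p ++ z1 :: (S ++ z2 :: q)) :
    ∃ L', Step L L' (pr (z1 :: (R ++ [z2]))) S N0 (pr (z1 :: (S ++ [z2]))) := by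
  obtain ⟨Q', hQ'⟩ := refill hf R
  have hQm : (Q' : Multiset V) + (S : Multiset V) = (L.Q 0 0 : Multiset V) + (R : Multiset V) := by
    have h1 := congrArg (fun l : List V => (l : Multiset V)) hf
    have h2 := congrArg (fun l : List V => (l : Multiset V)) hQ'
    simp only [Cfg.full, ← Multiset.cons_coe, ← Multiset.coe_add, Multiset.coe_nil,
      ← Multiset.singleton_add] at h1 h2
    have h3 : ({L.a 0} + {L.b 0} : Multiset V) + (Q' + S) = ({L.a 0} + {L.b 0}) + (L.Q 0 0 + R) := by
      calc _ = ({L.a 0} + (Q' + ({L.b 0} + 0)) : Multiset V) + S := by abel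
        _ = ({L.a 0} + (L.Q 0 0 + ({L.b 0} + 0)) : Multiset V) + R := by
          rw [h1, h2]; abel
        _ = _ := by abel
    exact add_left_cancel h3
  have hlen : Q'.length + S.length = (L.Q 0 0).length + R.length := by
    have := congrArg Multiset.card hQm
    simpa using this
  have hw : we (L.a 0 :: (Q' ++ [L.b 0])) + pr (z1 :: (S ++ [z2])) + pr S =
      we (L.full 0 0) + pr (z1 :: (R ++ [z2])) + pr R := by
    rw [hQ', hf, we_mid, we_mid, we_eq _ _ S hS, we_eq _ _ R hR]; abel
  refine ⟨⟨L.a, L.b, ![![Q', L.Q 0 1, L.Q 0 2], L.Q 1, L.Q 2], N0 + pr S⟩, ?_, ?_, rfl, ?_⟩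
  · simp only [Cfg.VT, Fin.sum_univ_three, hN, nv_add, nv_pr _ hS, nv_pr _ hR, Matrix.cons_val]
    ext x
    have h := congrArg (Multiset.count x) hQm
    simp only [Multiset.count_add] at h ⊢
    omega
  · simp only [Cfg.TE, Fin.sum_univ_three, hN, Cfg.full, Matrix.cons_val] at hw ⊢
    ext x
    have h := congrArg (Multiset.count x) hw
    simp only [Multiset.count_add] at h ⊢
    omega
  · intro i j
    have : Even Q'.length := by have := hok 0 0; grind
    fin_cases i <;> fin_cases j <;> simp [this, hok]

/-- `b0` is moved to `v` on the path `10`. -/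
lemma X3 (hok : ∀ i j, Even (L.Q i j).length) (hR : Even R.length) (hN : L.N = pr R + N0)
    {p r q : List V} (hS : Even S.length) (hr : Even r.length)
    (hf : L.a 0 :: L.Q 0 0 = p ++ u :: S) (hf' : L.Q 1 0 = r ++ v :: q) :
    ∃ L', Step L L' (pr (u :: (R ++ [v]))) S N0 (pr (u :: (S ++ [L.b 0]))) := by
  obtain ⟨Q', hQ'⟩ : ∃ Q', L.a 0 :: Q' = p ++ u :: R := by
    rcases p with _ | ⟨x, p⟩
    · simp at hf ⊢; exact hf.1
    · simp at hf ⊢; exact hf.1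
  have hQm : (Q' : Multiset V) + (S : Multiset V) = (L.Q 0 0 : Multiset V) + (R : Multiset V) := by
    have h1 := congrArg (fun l : List V => (l : Multiset V)) hf
    have h2 := congrArg (fun l : List V => (l : Multiset V)) hQ'
    simp only [← Multiset.cons_coe, ← Multiset.coe_add,
      ← Multiset.singleton_add] at h1 h2
    ext x
    replace h1 := congrArg (Multiset.count x) h1
    replace h2 := congrArg (Multiset.count x) h2
    simp only [Multiset.count_add] at h1 h2 ⊢
    omega
  have hlen : Q'.length + S.length = (L.Q 0 0).length + R.length := by
    have := congrArg Multiset.card hQm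
    simpa using this
  have hw0 : we (L.a 0 :: (Q' ++ [v])) + pr (u :: (S ++ [L.b 0])) + pr S =
      we (L.full 0 0) + pr (u :: (R ++ [v])) + pr R := by
    have e1 : L.a 0 :: (Q' ++ [v]) = p ++ u :: (R ++ [v]) := by
      rw [← List.cons_append, hQ']; simp
    have e2 : L.full 0 0 = p ++ u :: (S ++ [L.b 0]) := by
      rw [Cfg.full, ← List.cons_append, hf]; simp
    rw [e1, e2, we_append, we_append p (S ++ _), we_eq _ _ S hS, we_eq _ _ R hR]
    abel
  have hw1 : we (L.full 1 0) = we (L.a 1 :: (r ++ [v])) + we (v :: (q ++ [L.b 0])) := by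
    rw [Cfg.full, hf']
    have : L.a 1 :: (r ++ v :: q ++ [L.b 0]) = (L.a 1 :: r) ++ v :: (q ++ [L.b 0]) := by simp
    rw [this, we_append]; rfl
  have hw2 : we (L.a 2 :: (L.Q 2 0 ++ L.b 0 :: q.reverse ++ [v])) =
      we (L.full 2 0) + we (v :: (q ++ [L.b 0])) := by
    have : L.a 2 :: (L.Q 2 0 ++ L.b 0 :: q.reverse ++ [v]) =
      (L.a 2 :: L.Q 2 0) ++ L.b 0 :: (q.reverse ++ [v]) := by simp
    rw [this, we_append, ← we_reverse (v :: _)]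
    simp [Cfg.full]
  refine ⟨⟨L.a, ![v, L.b 1, L.b 2], ![![Q', L.Q 0 1, L.Q 0 2], ![r, L.Q 1 1, L.Q 1 2],
    ![L.Q 2 0 ++ L.b 0 :: q.reverse, L.Q 2 1, L.Q 2 2]], N0 + pr S⟩, ?_, ?_, rfl, ?_⟩
  · simp only [Cfg.VT, Fin.sum_univ_three, hN, nv_add, nv_pr _ hS, nv_pr _ hR, Matrix.cons_val,
      hf', ← Multiset.coe_add, ← Multiset.cons_coe, Multiset.coe_reverse, ← Multiset.singleton_add]
    ext x
    have h := congrArg (Multiset.count x) hQm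
    simp only [Multiset.count_add] at h ⊢
    omega
  · simp only [Cfg.TE, Fin.sum_univ_three, hN, Cfg.full, Matrix.cons_val] at hw0 hw1 hw2 ⊢
    rw [hw2, hw1]
    ext x
    have h := congrArg (Multiset.count x) hw0
    simp only [Multiset.count_add] at h ⊢
    omega
  · have h1 : Even Q'.length := by have := hok 0 0; grind
    have h2 : Even (L.Q 2 0 ++ L.b 0 :: q.reverse).length := by
      have h3 := hok 1 0
      have h4 := hok 2 0
      rw [hf'] at h3
      simp at h3 ⊢; grind
    intro i j
    fin_cases i <;> fin_cases j <;> first | exact h1 | exact hr | exact h2 | exact hok _ _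

/-- the configuration after the exchange X4 -/
def C4 (L : Cfg V) (u : V) (R : List V) (v : V) (p q r w : List V) (N0 : Multiset (Sym2 V)) :
    Cfg V :=
  ⟨![u, L.a 1, L.a 2], ![v, L.b 1, L.b 2], ![![R, q, p.reverse ++ L.a 0 :: L.Q 0 2],
    ![r, L.Q 1 1, L.Q 1 2], ![L.Q 2 0 ++ L.b 0 :: w.reverse, L.Q 2 1, L.Q 2 2]], N0 + pr (L.Q 0 0)⟩

lemma X4 (hok : ∀ i j, Even (L.Q i j).length) (hR : Even R.length) (hN : L.N = pr R + N0)
    {p q r w : List V} (hq : Even q.length) (hr : Even r.length)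
    (hf : L.Q 0 1 = p ++ u :: q) (hf' : L.Q 1 0 = r ++ v :: w) :
    Step L (C4 L u R v p q r w N0) (pr (u :: (R ++ [v]))) (L.Q 0 0) N0 (pr (L.full 0 0)) := by
  have hw0 : we (L.full 0 0) = pr (L.full 0 0) + pr (L.Q 0 0) := we_eq _ _ _ (hok 0 0)
  have hw1 : we (L.full 1 0) = we (L.a 1 :: (r ++ [v])) + we (v :: (w ++ [L.b 0])) := by
    rw [Cfg.full, hf']
    have : L.a 1 :: (r ++ v :: w ++ [L.b 0]) = (L.a 1 :: r) ++ v :: (w ++ [L.b 0]) := by simp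
    rw [this, we_append]; rfl
  have hw2 : we (L.a 2 :: (L.Q 2 0 ++ L.b 0 :: w.reverse ++ [v])) =
      we (L.full 2 0) + we (v :: (w ++ [L.b 0])) := by
    have : L.a 2 :: (L.Q 2 0 ++ L.b 0 :: w.reverse ++ [v]) =
      (L.a 2 :: L.Q 2 0) ++ L.b 0 :: (w.reverse ++ [v]) := by simp
    rw [this, we_append, ← we_reverse (v :: _)]
    simp [Cfg.full]
  have hw3 : we (L.full 0 1) = we (L.a 0 :: (p ++ [u])) + we (u :: (q ++ [L.b 1])) := by
    rw [Cfg.full, hf]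
    have : L.a 0 :: (p ++ u :: q ++ [L.b 1]) = (L.a 0 :: p) ++ u :: (q ++ [L.b 1]) := by simp
    rw [this, we_append]; rfl
  have hw4 : we (u :: (p.reverse ++ L.a 0 :: L.Q 0 2 ++ [L.b 2])) =
      we (L.full 0 2) + we (L.a 0 :: (p ++ [u])) := by
    have : u :: (p.reverse ++ L.a 0 :: L.Q 0 2 ++ [L.b 2]) =
      (u :: p.reverse) ++ L.a 0 :: (L.Q 0 2 ++ [L.b 2]) := by simp
    rw [this, we_append, ← we_reverse (u :: p.reverse ++ _)]
    simp [Cfg.full, add_comm]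
  refine ⟨?_, ?_, rfl, ?_⟩
  · simp only [C4, Cfg.VT, Fin.sum_univ_three, hN, nv_add, nv_pr _ hR, nv_pr _ (hok 0 0),
      Matrix.cons_val,
      hf', hf, ← Multiset.coe_add, ← Multiset.cons_coe, Multiset.coe_reverse,
      ← Multiset.singleton_add]
    ext x
    simp only [Multiset.count_add]
    omega
  · simp only [C4, Cfg.TE, Fin.sum_univ_three, hN, Cfg.full, Matrix.cons_val] at hw0 hw1 hw2 hw3 hw4 ⊢
    rw [hw2, hw1, hw4, hw3, hw0, we_eq _ _ _ hR]
    ext x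
    simp only [Multiset.count_add]
    omega
  · have h2 : Even (L.Q 2 0 ++ L.b 0 :: w.reverse).length := by
      have h3 := hok 1 0
      have h4 := hok 2 0
      rw [hf'] at h3
      simp at h3 ⊢; grind
    have h1 : Even (p.reverse ++ L.a 0 :: L.Q 0 2).length := by
      have h3 := hok 0 1
      have h4 := hok 0 2
      rw [hf] at h3
      simp at h3 ⊢; grind
    intro i j
    fin_cases i <;> fin_cases j <;>
      first | exact h1 | exact hR | exact hr | exact hq | exact h2 | exact hok _ _

end
end K
end Paper

namespace Paper
namespace K
open Classical

variable {V : Type*}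

section
variable {G : SimpleGraph V} {c : V → Bool} {m : V → V} {L L' : Cfg V} {u v : V} {R S : List V}
  {N0 P D : Multiset (Sym2 V)}

lemma split2 {l : List V} (hu : u ∈ l) (hv : v ∈ l) (h : u ≠ v) :
    ∃ p S q, l = p ++ u :: (S ++ v :: q) ∨ l = p ++ v :: (S ++ u :: q) := by
  obtain ⟨p, q, rfl⟩ := List.append_of_mem hu
  simp only [List.mem_append, List.mem_cons] at hv
  rcases hv with hv | rfl | hv
  · obtain ⟨p', q', rfl⟩ := List.append_of_mem hv
    exact ⟨p', q', q, Or.inr (by simp)⟩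
  · exact (h rfl).elim
  · obtain ⟨p', q', rfl⟩ := List.append_of_mem hv
    exact ⟨p, p', q', Or.inl (by simp)⟩

lemma we_sub {l p q : List V} {e} (h : e ∈ we l) : e ∈ we (p ++ (l ++ q)) := by
  obtain ⟨p', x, y, q', rfl, rfl⟩ := mem_we.1 h
  exact mem_we.2 ⟨p ++ p', x, y, q' ++ q, by simp, rfl⟩

lemma TE_seg {i j} {p l q : List V} (hf : L.full i j = p ++ (l ++ q)) {e} (h : e ∈ we l) :
    e ∈ L.TE := Cfg.mem_TE.2 (Or.inl ⟨i, j, hf ▸ we_sub h⟩)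

lemma seg_even (E : Env G c m) (hL : L.Ok G) {i j} {x y : V} {p l q : List V}
    (hf : L.full i j = p ++ x :: (l ++ y :: q)) (hc : c x ≠ c y) : Even l.length := by
  have h := E.par l x y (fun e he => hL.adj e (TE_seg (i := i) (j := j) (p := p) (q := q)
    (l := x :: (l ++ [y])) (by rw [hf]; simp) he))
  rw [← Nat.not_odd_iff_even, ← h]
  exact hc

lemma seg_odd (E : Env G c m) (hL : L.Ok G) {i j} {x y : V} {p l q : List V}
    (hf : L.full i j = p ++ x :: (l ++ y :: q)) (hc : c x = c y) : Odd l.length := by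
  have h := E.par l x y (fun e he => hL.adj e (TE_seg (i := i) (j := j) (p := p) (q := q)
    (l := x :: (l ++ [y])) (by rw [hf]; simp) he))
  exact h.1 hc

lemma perm2 : ∀ i k : Fin 3, i ≠ k → ∃ σ : Equiv.Perm (Fin 3), σ 0 = i ∧ σ 1 = k := by decide
lemma perm1 (i : Fin 3) : ∃ σ : Equiv.Perm (Fin 3), σ 0 = i := ⟨Equiv.swap 0 i, by simp⟩

lemma prog12_00 (E : Env G c m) (hL : Min G m L) (hE : Ear c m L u R v N0)
    (hu : u ∈ L.full 0 0) (hv : v ∈ L.full 0 0) : False := by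
  have huv : c u ≠ c v := by rw [hE.cu, hE.cv]; simp
  obtain ⟨p, S, q, hf | hf⟩ := split2 hu hv (fun h => huv (by rw [h]))
  · have hS := seg_even E hL.ok hf huv
    obtain ⟨L', hs⟩ := X12 hL.ok.ev hE.ev hE.hN hS hf
    obtain ⟨y, hy⟩ := pr_head (u := u) (l := S ++ [v]) (by simp)
    exact hs.prog E hL hE (fun e he => TE_seg (i := 0) (j := 0) (p := p) (q := q)
      (l := u :: (S ++ [v])) (by rw [hf]; simp) (pr_le_we _ he)) hy (Or.inl rfl)
  · have hS := seg_even E hL.ok hf huv.symm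
    obtain ⟨L', hs⟩ := X12 (R := R.reverse) (N0 := N0) hL.ok.ev (by simpa using hE.ev)
      (by rw [pr_reverse _ hE.ev]; exact hE.hN) hS hf
    obtain ⟨y, hy⟩ := pr_head (u := v) (l := S ++ [u]) (by simp)
    rw [pr_ear_rev hE.ev] at hs
    exact hs.prog E hL hE (fun e he => TE_seg (i := 0) (j := 0) (p := p) (q := q)
      (l := v :: (S ++ [u])) (by rw [hf]; simp) (pr_le_we _ he)) hy (Or.inr rfl)

lemma prog12 (E : Env G c m) (hL : Min G m L) (hE : Ear c m L u R v N0) {i j}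
    (hu : u ∈ L.full i j) (hv : v ∈ L.full i j) : False := by
  obtain ⟨σ, hσ⟩ := perm1 i
  obtain ⟨τ, hτ⟩ := perm1 j
  exact prog12_00 E (hL.rl σ τ) (hE.rl σ τ) (by simpa [hσ, hτ] using hu)
    (by simpa [hσ, hτ] using hv)

lemma prog3 (E : Env G c m) (hL : Min G m L) (hC : L.Col c) (hE : Ear c m L u R v N0) {i j k}
    (hik : i ≠ k) (hu : u ∈ L.a i :: L.Q i j) (hv : v ∈ L.Q k j) : False := by
  obtain ⟨σ, rfl, rfl⟩ := perm2 i k hik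
  obtain ⟨τ, rfl⟩ := perm1 j
  replace hL := hL.rl σ τ
  replace hC := hC.rl σ τ
  replace hE := hE.rl σ τ
  replace hu : u ∈ (L.rl σ τ).a 0 :: (L.rl σ τ).Q 0 0 := hu
  replace hv : v ∈ (L.rl σ τ).Q 1 0 := hv
  generalize L.rl σ τ = L at *
  obtain ⟨p, S, hf⟩ := List.append_of_mem hu
  obtain ⟨r, q, hf'⟩ := List.append_of_mem hv
  have h1 : L.full 0 0 = p ++ u :: (S ++ L.b 0 :: []) := by
    rw [Cfg.full, ← List.cons_append, hf]; simp
  have h2 : L.full 1 0 = [] ++ L.a 1 :: (r ++ v :: (q ++ [L.b 0])) := by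
    rw [Cfg.full, hf']; simp
  have hS := seg_even E hL.ok h1 (by rw [hE.cu, hC.b]; simp)
  have hr := seg_even E hL.ok h2 (by rw [hE.cv, hC.a]; simp)
  obtain ⟨L', hs⟩ := X3 hL.ok.ev hE.ev hE.hN hS hr hf hf'
  obtain ⟨y, hy⟩ := pr_head (u := u) (l := S ++ [L.b 0]) (by simp)
  exact hs.prog E hL hE (fun e he => TE_seg (i := 0) (j := 0) (p := p) (q := [])
      (l := u :: (S ++ [L.b 0])) (by rw [h1]; simp) (pr_le_we _ he)) hy (Or.inl rfl)

lemma prog3' (E : Env G c m) (hL : Min G m L) (hC : L.Col c) (hE : Ear c m L u R v N0) {i j l}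
    (hjl : l ≠ j) (hu : u ∈ L.Q i j) (hv : v = L.b l ∨ v ∈ L.Q i l) : False := by
  refine prog3 E.tr hL.tr hC.tr hE.tr (i := l) (j := i) (k := j) hjl ?_ ?_
  · simpa [Cfg.tr] using hv
  · simpa [Cfg.tr] using hu

lemma stuck (E : Env G c m) (hL : Min G m L) (hC : L.Col c) (hE : Ear c m L u R v N0) :
    ∃ i j k l, i ≠ k ∧ j ≠ l ∧ u ∈ L.Q i j ∧ v ∈ L.Q k l := by
  have hu : (∃ i, u = L.a i) ∨ ∃ i j, u ∈ L.Q i j := by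
    rcases hL.ok.cases u with h | ⟨j, h⟩ | h | h
    · exact Or.inl h
    · have := hC.b j; rw [← h, hE.cu] at this; simp at this
    · exact Or.inr h
    · exact (hE.hu h).elim
  have hv : (∃ i, v = L.b i) ∨ ∃ i j, v ∈ L.Q i j := by
    rcases hL.ok.cases v with ⟨j, h⟩ | h | h | h
    · have := hC.a j; rw [← h, hE.cv] at this; simp at this
    · exact Or.inl h
    · exact Or.inr h
    · exact (hE.hv h).elim
  rcases hu with ⟨i, hu⟩ | ⟨i, j, hu⟩ <;> rcases hv with ⟨l, hv⟩ | ⟨k, l, hv⟩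
  · exact (prog12 E hL hE (i := i) (j := l) (by simp [Cfg.mem_full, hu])
      (by simp [Cfg.mem_full, hv])).elim
  · by_cases h : i = k
    · subst h
      exact (prog12 E hL hE (i := i) (j := l) (by simp [Cfg.mem_full, hu])
        (by simp [Cfg.mem_full, hv])).elim
    · exact (prog3 E hL hC hE (i := i) (j := l) (k := k) h (by simp [hu]) hv).elim
  · by_cases h : l = j
    · subst h
      exact (prog12 E hL hE (i := i) (j := l) (by simp [Cfg.mem_full, hu])
        (by simp [Cfg.mem_full, hv])).elim
    · exact (prog3' E hL hC hE (i := i) (j := j) (l := l) h hu (Or.inl hv)).elim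
  · by_cases h : l = j
    · subst h
      by_cases h : i = k
      · subst h
        exact (prog12 E hL hE (i := i) (j := l) (by simp [Cfg.mem_full, hu])
          (by simp [Cfg.mem_full, hv])).elim
      · exact (prog3 E hL hC hE (i := i) (j := l) (k := k) h (by simp [hu]) hv).elim
    · by_cases h' : i = k
      · subst h'
        exact (prog3' E hL hC hE (i := i) (j := j) (l := l) h hu (Or.inr hv)).elim
      · exact ⟨i, j, k, l, h', fun e => h e.symm, hu, hv⟩

/-- Data of a stuck ear and the resulting exchange. -/
structure Ex (G : SimpleGraph V) (c : V → Bool) (m : V → V) (L : Cfg V) (u : V) (R : List V)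
    (v : V) (N0 : Multiset (Sym2 V)) (p q r w : List V) : Prop where
  hu : L.Q 0 1 = p ++ u :: q
  hv : L.Q 1 0 = r ++ v :: w
  hp : Odd p.length
  hq : Even q.length
  hr : Even r.length
  hw : Odd w.length
  step : Step L (C4 L u R v p q r w N0) (pr (u :: (R ++ [v]))) (L.Q 0 0) N0 (pr (L.full 0 0))
  min : Min G m (C4 L u R v p q r w N0)
  col : (C4 L u R v p q r w N0).Col c
  full : ∀ e ∈ pr (L.full 0 0), isM m e

lemma stuck' (E : Env G c m) (hL : Min G m L) (hC : L.Col c) (hE : Ear c m L u R v N0)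
    (hu : u ∈ L.Q 0 1) (hv : v ∈ L.Q 1 0) : ∃ p q r w, Ex G c m L u R v N0 p q r w := by
  obtain ⟨p, q, hf⟩ := List.append_of_mem hu
  obtain ⟨r, w, hf'⟩ := List.append_of_mem hv
  have h1 : L.full 0 1 = [] ++ L.a 0 :: (p ++ u :: (q ++ [L.b 1])) := by
    rw [Cfg.full, hf]; simp
  have h2 : L.full 1 0 = [] ++ L.a 1 :: (r ++ v :: (w ++ [L.b 0])) := by
    rw [Cfg.full, hf']; simp
  have hp := seg_odd E hL.ok h1 (by rw [hE.cu, hC.a])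
  have hr := seg_even E hL.ok h2 (by rw [hE.cv, hC.a]; simp)
  have hq : Even q.length := by
    have := hL.ok.ev 0 1; rw [hf] at this; simp at this; grind
  have hw : Odd w.length := by
    have := hL.ok.ev 1 0; rw [hf'] at this; simp at this; grind
  have hs := X4 hL.ok.ev hE.ev hE.hN hq hr hf hf'
  have := hs.min E hL hE.inM
  refine ⟨p, q, r, w, hf, hf', hp, hq, hr, hw, hs, this.1, ⟨?_, ?_⟩, this.2⟩
  · intro i; fin_cases i
    · exact hE.cu
    · exact hC.a 1
    · exact hC.a 2
  · intro i; fin_cases i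
    · exact hE.cv
    · exact hC.b 1
    · exact hC.b 2

end
end K
end Paper

namespace Paper
namespace K
open Classical

variable {V : Type*}

section
variable {G : SimpleGraph V} {c : V → Bool} {m : V → V} {L L' : Cfg V} {u v : V} {R S : List V}
  {N0 P D : Multiset (Sym2 V)} {e : Sym2 V}

structure Pre (c : V → Bool) (m : V → V) (L : Cfg V) (e : Sym2 V) (u : V) (R : List V) (v : V)
    (N0 : Multiset (Sym2 V)) : Prop where
  cu : c u = true
  cv : c v = false
  ev : Even R.length
  hN : L.N = pr R + N0
  inM : ∀ e ∈ pr (u :: (R ++ [v])), isM m e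
  nt : ∀ e ∈ pr (u :: (R ++ [v])), e ∉ L.TE
  uR : u ∉ R
  vR : v ∉ R
  he : e ∈ pr (u :: (R ++ [v]))

lemma Pre.tr (h : Pre c m L e u R v N0) : Pre (fun x => !c x) m L.tr e v R.reverse u N0 := by
  have hR := pr_ear_rev (u := u) (v := v) h.ev
  exact ⟨by simp [h.cv], by simp [h.cu],
    by simpa using h.ev, by simpa [pr_reverse _ h.ev] using h.hN, by rw [hR]; exact h.inM,
    by rw [hR]; simpa using h.nt, by simpa using h.vR, by simpa using h.uR, by rw [hR]; exact h.he⟩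

/-- the vertices of a matched list are closed under `m` -/
lemma pr_closed (E : Env G c m) {l : List V} (hl : Even l.length) (h : ∀ e ∈ pr l, isM m e) {x : V}
    (hx : x ∈ l) : m x ∈ l ∧ s(x, m x) ∈ pr l := by
  have h1 : x ∈ nv (pr l) := by rw [nv_pr _ hl]; exact hx
  obtain ⟨e, he, hxe⟩ := mem_nv.1 h1
  have h2 := E.isM_eq (h e he) hxe
  subst h2
  exact ⟨mem_of_pr he (by simp), he⟩

lemma N_mem_TE {e} (h : e ∈ L.N) : e ∈ L.TE := Cfg.mem_TE.2 (Or.inr h)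

lemma nvN_nodup (hL : L.Ok G) : (nv L.N).Nodup := by
  simpa [Cfg.part] using hL.part_nodup (.inr (.inr (.inr ())))

lemma N_uniq (hL : L.Ok G) {x : V} {e e' : Sym2 V} (he : e ∈ L.N) (he' : e' ∈ L.N) (hx : x ∈ e)
    (hx' : x ∈ e') : e = e' := by
  by_contra hne
  obtain ⟨N1, hN1⟩ := Multiset.exists_cons_of_mem he
  have : e' ∈ N1 := by
    rw [hN1, Multiset.mem_cons] at he'
    exact he'.resolve_left (fun h => hne h.symm)
  have hx1 : x ∈ nv N1 := mem_nv.2 ⟨e', this, hx'⟩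
  have hnd := nvN_nodup hL
  rw [hN1] at hnd
  induction e with
  | _ a b =>
    rw [nv_cons, Multiset.nodup_cons, Multiset.nodup_cons, Multiset.mem_cons] at hnd
    rw [Sym2.mem_iff] at hx
    rcases hx with rfl | rfl
    · exact hnd.1 (Or.inr hx1)
    · exact hnd.2.1 hx1

/-- An edge of `TE` at a vertex outside of the subdivision is in `N`. -/
lemma TE_N (hL : L.Ok G) {x : V} {e : Sym2 V} (he : e ∈ L.TE) (hx : x ∈ e) (hxN : x ∈ nv L.N) :
    e ∈ L.N := by
  rcases Cfg.mem_TE.1 he with ⟨i, j, h⟩ | h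
  · exact (hL.full_nN (mem_of_we h hx) hxN).elim
  · exact h

lemma Pre.closed_false (E : Env G c m) (hL : Min G m L) (h : Pre c m L e u R v N0)
    (huv : s(v, u) ∈ N0) : False := by
  obtain ⟨N1, rfl⟩ := Multiset.exists_cons_of_mem huv
  have hs : Step L ⟨L.a, L.b, L.Q, pr (u :: (R ++ [v])) + N1⟩ (pr (u :: (R ++ [v]))) []
      (pr (u :: (R ++ [v])) + N1) (s(v, u) ::ₘ pr R) := by
    refine ⟨?_, ?_, by simp, hL.ok.ev⟩
    · simp only [Cfg.VT, h.hN, nv_add, nv_cons, nv_pr _ h.ev]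
      rw [nv_pr]
      · simp only [← Multiset.cons_coe, ← Multiset.coe_add, ← Multiset.singleton_add]
        ext x
        simp only [Multiset.count_add]
        simp only [Multiset.coe_nil, Multiset.count_zero]
        omega
      · have := h.ev; simp; grind
    · simp only [Cfg.TE, h.hN, Cfg.full, ← Multiset.singleton_add]
      abel
  have h1 := (hs.min E hL h.inM).2 s(v, u) (by simp)
  rw [E.isM_mk] at h1
  have h2 := h.inM
  obtain ⟨y, hy⟩ := pr_head (u := u) (l := R ++ [v]) (by simp)
  have h3 := E.isM_mk.1 (h.inM _ hy)
  have h4 : m u = v := by rw [h1, E.inv]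
  rw [h3, h4] at hy
  refine h.nt _ hy (N_mem_TE ?_)
  rw [h.hN, Sym2.eq_swap]; simp

lemma Pre.ext (E : Env G c m) (hL : Min G m L) : ∀ (n : ℕ) (R v N0), Multiset.card N0 = n →
    Pre c m L e u R v N0 → ∃ R' v' N0', Pre c m L e u R' v' N0' ∧ v' ∉ nv L.N ∧
      (v ∉ nv L.N → v' = v) := by
  intro n
  induction n with
  | zero =>
    intro R v N0 hn h
    refine ⟨R, v, N0, h, fun hv => ?_, fun _ => rfl⟩
    rw [Multiset.card_eq_zero] at hn
    subst hn
    rw [h.hN, add_zero, nv_pr _ h.ev] at hv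
    exact h.vR hv
  | succ n ih =>
    intro R v N0 hn h
    by_cases hv : v ∈ nv L.N
    swap
    · exact ⟨R, v, N0, h, hv, fun _ => rfl⟩
    have hv0 : v ∈ nv N0 := by
      have := hv
      rw [h.hN, nv_add, nv_pr _ h.ev, Multiset.mem_add] at this
      exact this.resolve_left h.vR
    obtain ⟨f, hf, hvf⟩ := mem_nv.1 hv0
    obtain ⟨w, rfl⟩ := Sym2.mem_iff_exists.1 hvf
    by_cases hwu : w = u
    · subst hwu; exact (h.closed_false E hL hf).elim
    obtain ⟨N1, rfl⟩ := Multiset.exists_cons_of_mem hf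
    have hN := h.hN
    have hfN : s(v, w) ∈ L.N := by rw [hN]; simp
    have hwN : w ∈ nv L.N := mem_nv.2 ⟨_, hfN, by simp⟩
    have hadj : G.Adj v w := hL.ok.adj _ (N_mem_TE hfN)
    have hcw : c w = true := by have := E.col _ _ hadj; rw [h.cv] at this; simpa using this
    have hnd := nvN_nodup hL.ok
    rw [hN, nv_add, nv_cons, nv_pr _ h.ev, Multiset.nodup_add] at hnd
    have hwR : w ∉ R := fun hw => Multiset.disjoint_left.1 hnd.2.2 hw (by simp)
    have hev2 : Even (u :: (R ++ [v])).length := by have := h.ev; simp; grind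
    have hcl : ∀ x ∈ u :: (R ++ [v]), m x ≠ w := by
      intro x hx hxw
      have := (pr_closed E hev2 h.inM hx).1
      rw [hxw] at this
      simp at this
      rcases this with h1 | h1 | h1
      · exact hwu h1
      · exact hwR h1
      · exact hadj.ne h1.symm
    have hpr : pr (u :: (R ++ [v, w] ++ [m w])) = pr (u :: (R ++ [v])) + {s(w, m w)} := by
      have : u :: (R ++ [v, w] ++ [m w]) = (u :: (R ++ [v])) ++ [w, m w] := by simp
      rw [this, pr_append _ _ hev2]; simp
    have hp : Pre c m L e u (R ++ [v, w]) (m w) N1 := by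
      refine ⟨h.cu, by rw [E.mcol, hcw]; rfl, by have := h.ev; simp; grind, ?_, ?_, ?_, ?_, ?_, ?_⟩
      · rw [hN, pr_append _ _ h.ev]
        simp only [pr_cons2, pr_nil, ← Multiset.singleton_add, add_zero, add_assoc]
      · rw [hpr]; intro e he
        rw [Multiset.mem_add, Multiset.mem_singleton] at he
        rcases he with he | rfl
        · exact h.inM e he
        · exact ⟨w, rfl⟩
      · rw [hpr]; intro e he
        rw [Multiset.mem_add, Multiset.mem_singleton] at he
        rcases he with he | rfl
        · exact h.nt e he
        · intro hT
          have h1 := TE_N hL.ok hT (x := w) (by simp) hwN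
          have h2 := N_uniq hL.ok h1 hfN (x := w) (by simp) (by simp)
          rw [Sym2.eq_swap, Sym2.congr_left] at h2
          refine hcl v (by simp) ?_
          rw [← h2, E.inv]
      · have := h.uR
        have h3 : u ≠ v := by rintro rfl; have := h.cu; rw [h.cv] at this; simp at this
        simp [this, h3]; exact fun e => hwu e.symm
      · intro hx
        have h5 : m w ≠ w := (E.adj w).ne'
        simp [h5] at hx
        refine hcl (m w) (by simp; tauto) (E.inv w)
      · rw [hpr]; exact Multiset.mem_add.2 (Or.inl h.he)
    obtain ⟨R', v', N0', h1, h2, h3⟩ := ih _ _ _ (by simpa using hn) hp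
    exact ⟨R', v', N0', h1, h2, fun hx => (hx hv).elim⟩

lemma Pre.ear (E : Env G c m) (hL : Min G m L) (h : Pre c m L e u R v N0) :
    ∃ u' R' v' N0', Ear c m L u' R' v' N0' ∧ e ∈ pr (u' :: (R' ++ [v'])) ∧
      (v ∉ nv L.N → v' = v) := by
  obtain ⟨R1, v1, N1, h1, h2, h3⟩ := Pre.ext E hL _ R v N0 rfl h
  obtain ⟨R2, u2, N2, h4, h5, h6⟩ := Pre.ext E.tr hL.tr _ _ _ _ rfl h1.tr
  have h7 := h4.tr
  have hR := pr_ear_rev (u := u2) (v := v1) (R := R2.reverse) (by simpa using h4.ev)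
  refine ⟨u2, R2.reverse, v1, N2, ⟨by simpa using h7.cu, by simpa using h7.cv, h5, h2, h7.ev,
    h7.hN, h7.inM, fun e he => by simpa using h7.nt e he⟩, h7.he, h3⟩

lemma ear_edge (E : Env G c m) (hL : Min G m L) (he : isM m e) (hT : e ∉ L.TE) :
    ∃ u' R' v' N0', Ear c m L u' R' v' N0' ∧ e ∈ pr (u' :: (R' ++ [v'])) := by
  have : ∃ x, c x = true ∧ e = s(x, m x) := by
    obtain ⟨x, rfl⟩ := he
    cases hx : c x with
    | true => exact ⟨x, hx, rfl⟩
    | false => exact ⟨m x, by rw [E.mcol, hx]; rfl, by rw [E.inv, Sym2.eq_swap]⟩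
  obtain ⟨x, hx, rfl⟩ := this
  have hp : Pre c m L s(x, m x) x [] (m x) L.N := by
    refine ⟨hx, by rw [E.mcol, hx]; rfl, by simp, by simp, ?_, ?_, by simp, by simp, by simp⟩
    · intro e h
      simp at h; subst h; exact ⟨x, rfl⟩
    · intro e h
      simp at h; subst h; exact hT
  obtain ⟨u', R', v', N0', h1, h2, _⟩ := hp.ear E hL
  exact ⟨u', R', v', N0', h1, h2⟩

lemma ear_vert (E : Env G c m) (hL : Min G m L) {y : V} (hy : c y = false) (hyN : y ∉ nv L.N)
    (hT : s(y, m y) ∉ L.TE) : ∃ u' R' N0', Ear c m L u' R' y N0' := by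
  have hp : Pre c m L s(y, m y) (m y) [] y L.N := by
    refine ⟨by rw [E.mcol, hy]; rfl, hy, by simp, by simp, ?_, ?_, by simp, by simp, ?_⟩
    · intro e h
      simp at h; subst h; exact ⟨y, by rw [Sym2.eq_swap]⟩
    · intro e h
      simp at h; subst h; rw [Sym2.eq_swap]; exact hT
    · simp
  obtain ⟨u', R', v', N0', h1, h2, h3⟩ := hp.ear E hL
  rw [h3 hyN] at h1
  exact ⟨u', R', N0', h1⟩

end
end K
end Paper

namespace Paper
namespace K
open Classical

variable {V : Type*}

section
variable {G : SimpleGraph V} {c : V → Bool} {m : V → V} {L L' : Cfg V} {u v : V} {R S : List V}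
  {N0 P D : Multiset (Sym2 V)} {e e1 e2 : Sym2 V}

noncomputable def ML (L : Cfg V) (σ : Equiv.Perm (Fin 3)) : Multiset (Sym2 V) :=
  L.N + ∑ i, ∑ j, if σ i = j then pr (L.full i j) else pr (L.Q i j)

lemma mem_ML {σ : Equiv.Perm (Fin 3)} : e ∈ ML L σ ↔ e ∈ L.N ∨
    ∃ i j, (σ i = j ∧ e ∈ pr (L.full i j)) ∨ (σ i ≠ j ∧ e ∈ pr (L.Q i j)) := by
  simp only [ML, Multiset.mem_add, Multiset.mem_sum, Finset.mem_univ, true_and]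
  refine or_congr_right (exists_congr fun i => exists_congr fun j => ?_)
  split_ifs with h <;> simp [h]

def Done (G : SimpleGraph V) (e1 e2 : Sym2 V) : Prop :=
  ∃ L : Cfg V, L.Ok G ∧ ∃ σ, e1 ∈ ML L σ ∧ e2 ∈ ML L σ

lemma Done.symm (h : Done G e1 e2) : Done G e2 e1 := by
  obtain ⟨L, h1, σ, h2, h3⟩ := h
  exact ⟨L, h1, σ, h3, h2⟩

lemma permII : ∀ i j k l : Fin 3, ∃ σ : Equiv.Perm (Fin 3), σ i ≠ j ∧ σ k ≠ l := by decide
lemma permI_II : ∀ i j k l : Fin 3, (i = k → j ≠ l) →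
    ∃ σ : Equiv.Perm (Fin 3), σ i = j ∧ σ k ≠ l := by decide
lemma permI_I : ∀ i j k l : Fin 3, (i = k ↔ j = l) →
    ∃ σ : Equiv.Perm (Fin 3), σ i = j ∧ σ k = l := by decide

lemma done_II_II (hL : L.Ok G) {i j k l} (h1 : e1 ∈ pr (L.Q i j)) (h2 : e2 ∈ pr (L.Q k l)) :
    Done G e1 e2 := by
  obtain ⟨σ, h3, h4⟩ := permII i j k l
  exact ⟨L, hL, σ, mem_ML.2 (Or.inr ⟨i, j, Or.inr ⟨h3, h1⟩⟩), mem_ML.2 (Or.inr ⟨k, l, Or.inr ⟨h4, h2⟩⟩)⟩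

lemma done_I_II (hL : L.Ok G) {i j k l} (h1 : e1 ∈ pr (L.full i j)) (h2 : e2 ∈ pr (L.Q k l))
    (h : i = k → j ≠ l) : Done G e1 e2 := by
  obtain ⟨σ, h3, h4⟩ := permI_II i j k l h
  exact ⟨L, hL, σ, mem_ML.2 (Or.inr ⟨i, j, Or.inl ⟨h3, h1⟩⟩), mem_ML.2 (Or.inr ⟨k, l, Or.inr ⟨h4, h2⟩⟩)⟩

lemma done_I_I (hL : L.Ok G) {i j k l} (h1 : e1 ∈ pr (L.full i j)) (h2 : e2 ∈ pr (L.full k l))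
    (h : i = k ↔ j = l) : Done G e1 e2 := by
  obtain ⟨σ, h3, h4⟩ := permI_I i j k l h
  exact ⟨L, hL, σ, mem_ML.2 (Or.inr ⟨i, j, Or.inl ⟨h3, h1⟩⟩), mem_ML.2 (Or.inr ⟨k, l, Or.inl ⟨h4, h2⟩⟩)⟩

lemma TE_cases (hL : L.Ok G) (he : e ∈ L.TE) :
    e ∈ L.N ∨ ∃ i j, e ∈ pr (L.full i j) ∨ e ∈ pr (L.Q i j) := by
  rcases Cfg.mem_TE.1 he with ⟨i, j, h⟩ | h
  · right
    rw [Cfg.full, we_eq _ _ _ (hL.ev i j), Multiset.mem_add] at h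
    exact ⟨i, j, h⟩
  · exact Or.inl h

lemma done_N (hL : L.Ok G) (h1 : e1 ∈ L.N) (h2 : e2 ∈ L.TE) : Done G e1 e2 := by
  rcases TE_cases hL h2 with h | ⟨i, j, h | h⟩
  · exact ⟨L, hL, 1, mem_ML.2 (Or.inl h1), mem_ML.2 (Or.inl h)⟩
  · obtain ⟨σ, h3, _⟩ := permI_I i j i j (by simp)
    exact ⟨L, hL, σ, mem_ML.2 (Or.inl h1), mem_ML.2 (Or.inr ⟨i, j, Or.inl ⟨h3, h⟩⟩)⟩
  · obtain ⟨σ, h3, _⟩ := permII i j i j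
    exact ⟨L, hL, σ, mem_ML.2 (Or.inl h1), mem_ML.2 (Or.inr ⟨i, j, Or.inr ⟨h3, h⟩⟩)⟩

lemma nodup_split {y : V} : ∀ {p q p' q' : List V}, (p ++ y :: q).Nodup → p ++ y :: q = p' ++ y :: q' →
    p = p' ∧ q = q'
  | [], q, [], q', _, h => by simpa using h
  | [], q, x :: p', q', hn, h => by
    simp at h
    rw [h.2] at hn
    simp at hn
  | x :: p, q, [], q', hn, h => by
    simp at h
    rw [h.1] at hn
    simp at hn
  | x :: p, q, x' :: p', q', hn, h => by
    simp at h
    have := nodup_split (List.nodup_cons.1 hn).2 h.2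
    simp [h.1, this]

lemma NB (hL : L.Ok G) {i j} {y x z w : V} {A B : List V} (hy : y ∈ L.Q i j)
    (hf : L.full i j = A ++ x :: y :: z :: B) (h : s(y, w) ∈ L.TE) : w = x ∨ w = z := by
  rcases Cfg.mem_TE.1 h with ⟨k, l, h⟩ | h
  · obtain ⟨rfl, rfl⟩ := hL.Q_full hy (mem_of_we h (by simp))
    obtain ⟨p, a, b, q, h1, h2⟩ := mem_we.1 h
    have hn := hL.full_nodup i j
    rw [Sym2.eq_iff] at h2
    have hf' : L.full i j = (A ++ [x]) ++ y :: (z :: B) := by rw [hf]; simp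
    rcases h2 with ⟨rfl, rfl⟩ | ⟨rfl, rfl⟩
    · rw [hf'] at h1 hn
      have := (nodup_split hn h1).2
      simp at this
      exact Or.inr this.1.symm
    · have h1' : L.full i j = (p ++ [w]) ++ y :: q := by rw [h1]; simp
      rw [hf'] at h1' hn
      have := (nodup_split hn h1').1
      have := List.append_inj_right' this rfl
      simp at this
      exact Or.inl this.symm
  · exact (hL.Q_nN hy (mem_nv.2 ⟨_, h, by simp⟩)).elim

lemma count_chain (E : Env G c m) {x : V} {l : List V} (hl : Even l.length) (hx : c x = true)
    (h : ∀ e ∈ we (x :: l), e ∈ G.edgeSet) :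
    l.countP (fun v => c v) = l.countP (fun v => !c v) := by
  refine even_ind (P := fun l => ∀ x, c x = true → (∀ e ∈ we (x :: l), e ∈ G.edgeSet) →
    l.countP (fun v => c v) = l.countP (fun v => !c v)) ?_ ?_ l hl x hx h
  · simp
  · intro y z l _ ih x hx h
    simp only [we_cons2, Multiset.mem_cons, forall_eq_or_imp] at h
    have h1 := E.col _ _ h.1
    have h2 := E.col _ _ h.2.1
    rw [hx] at h1
    have hy : c y = false := by simpa using h1.symm
    rw [hy] at h2
    have hz : c z = true := by simpa using h2.symm
    have := ih z hz h.2.2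
    simp [hy, hz, this]

lemma T_lemma (E : Env G c m) {T : List V} (hn : T.Nodup)
    (hc : T.countP (fun v => c v) ≤ T.countP (fun v => !c v) + 1) {s t : V} (hst : s ≠ t)
    (hs : s ∈ T) (ht : t ∈ T) (cs : c s = true) (ct : c t = true) (ms : m s ∉ T) (mt : m t ∉ T) :
    ∃ y ∈ T, c y = false ∧ m y ∉ T := by
  by_contra hcon
  push Not at hcon
  have inj : Function.Injective m := fun x y h => by rw [← E.inv x, h, E.inv]
  let A := T.toFinset.filter (fun v => c v = true)
  let B := T.toFinset.filter (fun v => c v = false)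
  have hA : A.card = T.countP (fun v => c v) := by
    rw [List.countP_eq_length_filter, ← List.toFinset_card_of_nodup (hn.filter _)]
    congr 1; ext; simp [A]
  have hB : B.card = T.countP (fun v => !c v) := by
    rw [List.countP_eq_length_filter, ← List.toFinset_card_of_nodup (hn.filter _)]
    congr 1; ext; simp [B]
  have hsub : insert s (insert t (B.image m)) ⊆ A := by
    intro x hx
    simp only [Finset.mem_insert, Finset.mem_image, A, B, Finset.mem_filter, List.mem_toFinset] at hx ⊢
    rcases hx with rfl | rfl | ⟨y, ⟨hy, hcy⟩, rfl⟩
    · exact ⟨hs, cs⟩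
    · exact ⟨ht, ct⟩
    · exact ⟨hcon y hy hcy, by rw [E.mcol, hcy]; rfl⟩
  have hsB : ∀ x, m x ∉ T → x ∉ B.image m := by
    intro x hx h
    simp only [Finset.mem_image, B, Finset.mem_filter, List.mem_toFinset] at h
    obtain ⟨y, hy, rfl⟩ := h
    rw [E.inv] at hx
    exact hx hy.1
  have := Finset.card_le_card hsub
  rw [Finset.card_insert_of_notMem, Finset.card_insert_of_notMem (hsB t mt),
    Finset.card_image_of_injective _ inj] at this
  · omega
  · rw [Finset.mem_insert, not_or]; exact ⟨hst, hsB s ms⟩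

lemma aux (E : Env G c m) (hL : Min G m L) (hC : L.Col c) {i k} {r w : List V} {y : V}
    (hf : L.Q i k = r ++ y :: w) (hy : c y = false) (hT : s(y, m y) ∉ L.TE)
    (h2 : e2 ∈ pr (w ++ [L.b k])) (h1 : (∃ j, j ≠ k ∧ e1 ∈ pr (L.full i j)) ∨ e1 ∈ pr r) :
    Done G e1 e2 := by
  have hyQ : y ∈ L.Q i k := by rw [hf]; simp
  obtain ⟨u, R, N0, hE⟩ := ear_vert E hL hy (hL.ok.Q_nN hyQ) hT
  obtain ⟨i', j', k', l', hik, hjl, hu, hv⟩ := stuck E hL hC hE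
  obtain ⟨rfl, rfl⟩ := hL.ok.Q_inj hyQ hv
  obtain ⟨σ, rfl, rfl⟩ := perm2 _ _ hik
  obtain ⟨τ, rfl, rfl⟩ := perm2 _ _ hjl.symm
  replace h1 : (∃ j, j ≠ 0 ∧ e1 ∈ pr ((L.rl σ τ).full 1 j)) ∨ e1 ∈ pr r := by
    refine h1.imp_left ?_
    rintro ⟨j, hj, h⟩
    refine ⟨τ.symm j, ?_, by simpa using h⟩
    rintro h'
    rw [Equiv.symm_apply_eq] at h'
    exact hj h'
  replace hf : (L.rl σ τ).Q 1 0 = r ++ y :: w := hf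
  replace h2 : e2 ∈ pr (w ++ [(L.rl σ τ).b 0]) := h2
  replace hu : u ∈ (L.rl σ τ).Q 0 1 := hu
  replace hv : y ∈ (L.rl σ τ).Q 1 0 := hv
  replace hE := hE.rl σ τ
  replace hL := hL.rl σ τ
  replace hC := hC.rl σ τ
  clear hT hyQ hik hjl
  generalize L.rl σ τ = L at *
  obtain ⟨p, q, r', w', X⟩ := stuck' E hL hC hE hu hv
  have hn := hL.ok.Q_nodup 1 0
  have := X.hv
  rw [hf] at this hn
  obtain ⟨rfl, rfl⟩ := nodup_split hn this
  have h2' : e2 ∈ pr ((C4 L u R y p q r w N0).Q 2 0) := by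
    show e2 ∈ pr (L.Q 2 0 ++ L.b 0 :: w.reverse)
    rw [pr_append _ _ (hL.ok.ev 2 0), Multiset.mem_add]
    right
    have : (L.b 0 :: w.reverse) = (w ++ [L.b 0]).reverse := by simp
    rw [this, pr_reverse]
    · exact h2
    · have := X.hw; simp; grind
  rcases h1 with ⟨j, hj, h1⟩ | h1
  · have h1' : e1 ∈ pr ((C4 L u R y p q r w N0).full 1 j) := by
      fin_cases j
      · simp at hj
      · exact h1
      · exact h1
    exact done_I_II X.min.ok h1' h2' (by simp)
  · exact done_II_II X.min.ok (i := 1) (j := 0) h1 h2'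

lemma findaux (E : Env G c m) (hL : L.Ok G) (hC : L.Col c) {i k} {A B q : List V} {z y t t' : V}
    (hf : L.full i k = A ++ z :: y :: (B ++ t :: t' :: q)) (hy : c y = false) (ht : c t = true)
    (hz : m y ≠ z) (hB : m y ∉ B ++ [t]) :
    ∃ r w, L.a i :: r = A ++ [z] ∧ L.Q i k = r ++ y :: w ∧ s(t, t') ∈ pr (w ++ [L.b k]) ∧
      s(y, m y) ∉ L.TE := by
  obtain ⟨r, hr⟩ : ∃ r, L.a i :: r = A ++ [z] := by
    rcases A with _ | ⟨x, A⟩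
    · simp [Cfg.full] at hf ⊢; exact hf.1
    · simp [Cfg.full] at hf ⊢; exact hf.1
  have hf1 : L.full i k = L.a i :: (r ++ y :: (B ++ t :: t' :: q)) := by
    have := congrArg (· ++ (y :: (B ++ t :: t' :: q))) hr
    simpa [hf] using this.symm
  obtain ⟨w, hw⟩ : ∃ w, w ++ [L.b k] = B ++ t :: t' :: q := by
    rcases List.eq_nil_or_concat q with rfl | ⟨q', x, rfl⟩
    · have := congrArg List.getLast? hf1
      simp [Cfg.full, List.getLast?_append, List.getLast?_cons] at this
      exact ⟨B ++ [t], by simp [this]⟩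
    · have := congrArg List.getLast? hf1
      simp [Cfg.full, List.getLast?_append, List.getLast?_cons] at this
      exact ⟨B ++ t :: t' :: q', by simp [this]⟩
  have hQ : L.Q i k = r ++ y :: w := by
    rw [← hw] at hf1
    simp only [Cfg.full, List.cons.injEq, true_and] at hf1
    have : L.Q i k ++ [L.b k] = (r ++ y :: w) ++ [L.b k] := by rw [hf1]; simp
    exact List.append_cancel_right this
  refine ⟨r, w, hr, hQ, ?_, ?_⟩
  · rw [hw, mem_pr]
    have hev : Even B.length := seg_even E hL (x := y) (y := t) (p := A ++ [z]) (l := B)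
      (q := t' :: q) (by rw [hf]; simp) (by rw [hy, ht]; simp)
    exact ⟨B, t, t', q, rfl, hev, rfl⟩
  · intro hT
    have hyQ : y ∈ L.Q i k := by rw [hQ]; simp
    rcases B with _ | ⟨b, B⟩
    · rcases NB hL hyQ (A := A) (x := z) (y := y) (z := t) (B := t' :: q) (by rw [hf]; simp) hT with h | h
      · exact hz h
      · exact hB (by simp [h])
    · rcases NB hL hyQ (A := A) (x := z) (y := y) (z := b) (B := B ++ t :: t' :: q) (by rw [hf]; simp) hT with h | h
      · exact hz h
      · exact hB (by simp [h])

end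
end K
end Paper

namespace Paper
namespace K
open Classical

variable {V : Type*}

section
variable {G : SimpleGraph V} {c : V → Bool} {m : V → V} {L L' : Cfg V} {u v : V} {R S : List V}
  {N0 P D : Multiset (Sym2 V)} {e e1 e2 : Sym2 V}

lemma pref (E : Env G c m) (hL : L.Ok G) (hC : L.Col c) {i j} {p q : List V} {s s' : V}
    (hf : L.full i j = p ++ s :: s' :: q) (hp : Even p.length) :
    ∃ T, L.a i :: T = p ++ [s] ∧ L.full i j = L.a i :: (T ++ s' :: q) ∧ c s = true ∧
      T.countP (fun v => c v) = T.countP (fun v => !c v) := by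
  obtain ⟨T, hT⟩ : ∃ r, L.a i :: r = p ++ [s] := by
    rcases p with _ | ⟨x, A⟩
    · simp [Cfg.full] at hf ⊢; exact hf.1
    · simp [Cfg.full] at hf ⊢; exact hf.1
  have h1 : L.full i j = L.a i :: (T ++ s' :: q) := by
    have := congrArg (· ++ (s' :: q)) hT
    simpa [hf] using this.symm
  have hev : Even T.length := by
    have := congrArg List.length hT
    simp at this; rw [this]; exact hp
  refine ⟨T, hT, h1, ?_, ?_⟩
  · rcases p with _ | ⟨x, A⟩
    · simp at hT; rw [← hT.1]; exact hC.a i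
    · simp at hT
      have := seg_odd E hL (x := x) (y := s) (p := []) (l := A) (q := s' :: q) (i := i) (j := j)
      by_contra hc
      have h2 : c x = !c s := by rw [← hT.1, hC.a]; simpa using hc
      have h3 := seg_even E hL (x := x) (y := s) (p := []) (l := A) (q := s' :: q) (i := i) (j := j)
        (by rw [hf]; simp) (by rw [h2]; simp)
      simp at hp; grind
  · refine count_chain E hev (hC.a i) (fun e he => hL.full_adj i j e ?_)
    rw [h1]
    exact we_sub (p := []) (l := L.a i :: T) (q := s' :: q) he

lemma last_split {T w : List V} {x y : V} (h : w ++ [x] = T) (hy : y ∈ T) (hxy : y ≠ x) :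
    ∃ r w1, T = r ++ y :: (w1 ++ [x]) ∧ w = r ++ y :: w1 := by
  subst h
  have : y ∈ w := by simpa [hxy] using hy
  obtain ⟨r, w1, rfl⟩ := List.append_of_mem this
  exact ⟨r, w1, by simp, rfl⟩

lemma findhalf (E : Env G c m) (hL : L.Ok G) (hC : L.Col c) {i j} {p q T : List V} {s s' y : V}
    (hf : L.full i j = p ++ s :: s' :: q) (hT : L.a i :: T = p ++ [s]) (hs : c s = true)
    (hy : y ∈ T) (cy : c y = false) (my : m y ∉ L.a i :: T) :
    ∃ r w, L.Q i j = r ++ y :: w ∧ s(s, s') ∈ pr (w ++ [L.b j]) ∧ s(y, m y) ∉ L.TE := by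
  have hys : y ≠ s := by rintro rfl; rw [hs] at cy; simp at cy
  have hya : y ≠ L.a i := by rintro rfl; rw [hC.a] at cy; simp at cy
  obtain ⟨r, w1, h1, rfl⟩ := last_split hT.symm (y := y) (by simp [hy]) hys
  have hr : r ≠ [] := by
    rintro rfl
    simp at h1; exact hya h1.1.symm
  obtain ⟨A, z, rfl⟩ := (List.eq_nil_or_concat r).resolve_left hr
  rw [h1] at my
  obtain ⟨r, w, h3, h4, h5, h6⟩ := findaux E hL hC (i := i) (k := j) (A := A) (z := z) (y := y)
    (B := w1) (t := s) (t' := s') (q := q) (by rw [hf]; simp) cy hs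
    (by rintro h; apply my; simp [h]) (by intro h; apply my; simp at h ⊢; tauto)
  exact ⟨r, w, h4, h5, h6⟩

lemma alpha (E : Env G c m) (hL : Min G m L) (hC : L.Col c) {i j k} (hjk : j ≠ k)
    (h1 : e1 ∈ pr (L.full i j)) (h2 : e2 ∈ pr (L.full i k)) (m1 : isM m e1) (m2 : isM m e2)
    (hne : e1 ≠ e2) : Done G e1 e2 := by
  have h1' := h1
  have h2' := h2
  obtain ⟨p1, s, s', q1, f1, hp1, rfl⟩ := mem_pr.1 h1
  obtain ⟨p2, t, t', q2, f2, hp2, rfl⟩ := mem_pr.1 h2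
  obtain ⟨T1, hT1, g1, cs, n1⟩ := pref E hL.ok hC f1 hp1
  obtain ⟨T2, hT2, g2, ct, n2⟩ := pref E hL.ok hC f2 hp2
  have hs' := E.isM_mk.1 m1
  have ht' := E.isM_mk.1 m2
  have hst : s ≠ t := by
    rintro rfl; exact hne (by rw [hs', ht'])
  have nd1 := hL.ok.full_nodup i j
  have nd2 := hL.ok.full_nodup i k
  have disj : ∀ x, x ∈ L.full i j → x ∈ L.full i k → x = L.a i := by
    intro x hx hx'
    rw [Cfg.mem_full] at hx
    rcases hx with h | h | h
    · exact h
    · exact (hjk (hL.ok.Q_full h hx').2).elim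
    · rw [h] at hx'; exact (hjk (hL.ok.b_full hx')).elim
  have sub1 : ∀ x ∈ T1, x ∈ L.full i j := by intro x hx; rw [g1]; simp [hx]
  have sub2 : ∀ x ∈ T2, x ∈ L.full i k := by intro x hx; rw [g2]; simp [hx]
  have d1 := nd1
  have d2 := nd2
  rw [g1] at d1
  rw [g2] at d2
  have aT1 : L.a i ∉ T1 := by intro h; simp [h] at d1
  have aT2 : L.a i ∉ T2 := by intro h; simp [h] at d2
  have sT1 : s' ∉ L.a i :: T1 := by
    have : (L.a i :: T1 ++ s' :: q1).Nodup := d1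
    rw [List.nodup_append] at this
    intro h
    exact this.2.2 _ h s' (by simp) rfl
  have tT2 : t' ∉ L.a i :: T2 := by
    have : (L.a i :: T2 ++ t' :: q2).Nodup := d2
    rw [List.nodup_append] at this
    intro h
    exact this.2.2 _ h t' (by simp) rfl
  have s1 : s ∈ L.a i :: T1 := by rw [hT1]; simp
  have t2 : t ∈ L.a i :: T2 := by rw [hT2]; simp
  have sf : s' ∈ L.full i j := by rw [f1]; simp
  have tf : t' ∈ L.full i k := by rw [f2]; simp
  have key : ∃ y ∈ L.a i :: (T1 ++ T2), c y = false ∧ m y ∉ L.a i :: (T1 ++ T2) := by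
    refine T_lemma E (T := L.a i :: (T1 ++ T2)) (s := s) (t := t) ?_ ?_ hst
      (by simp at s1 ⊢; tauto) (by simp at t2 ⊢; tauto) cs ct ?_ ?_
    · have e1 : T1.Nodup := by
        exact (List.nodup_append.1 (List.nodup_cons.1 d1).2).1
      have e2 : T2.Nodup := by
        exact (List.nodup_append.1 (List.nodup_cons.1 d2).2).1
      rw [List.nodup_cons, List.nodup_append]
      refine ⟨by simp [aT1, aT2], e1, e2, ?_⟩
      rintro x hx _ hx' rfl
      exact aT1 (disj x (sub1 x hx) (sub2 x hx') ▸ hx)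
    · simp [hC.a, n1, n2]
    · rw [← hs']
      intro h
      simp only [List.mem_cons, List.mem_append] at h sT1
      have : s' ∈ T2 := by tauto
      have := disj s' sf (sub2 _ this)
      tauto
    · rw [← ht']
      intro h
      simp only [List.mem_cons, List.mem_append] at h tT2
      have : t' ∈ T1 := by tauto
      have := disj t' (sub1 _ this) tf
      tauto
  obtain ⟨y, hyT, cy, my⟩ := key
  have hya : y ≠ L.a i := by rintro rfl; rw [hC.a] at cy; simp at cy
  simp [hya] at hyT
  rcases hyT with hyT | hyT
  · obtain ⟨r, w, h3, h4, h5⟩ := findhalf E hL.ok hC f1 hT1 cs hyT cy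
      (by intro h; apply my; simp at h ⊢; tauto)
    exact (aux E hL hC h3 cy h5 h4 (Or.inl ⟨k, hjk.symm, h2'⟩)).symm
  · obtain ⟨r, w, h3, h4, h5⟩ := findhalf E hL.ok hC f2 hT2 ct hyT cy
      (by intro h; apply my; simp at h ⊢; tauto)
    exact aux E hL hC h3 cy h5 h4 (Or.inl ⟨j, hjk, h1'⟩)

lemma alpha' (E : Env G c m) (hL : Min G m L) (hC : L.Col c) {i j k} (hjk : j ≠ k)
    (h1 : e1 ∈ pr (L.full j i)) (h2 : e2 ∈ pr (L.full k i)) (m1 : isM m e1) (m2 : isM m e2)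
    (hne : e1 ≠ e2) : Done G e1 e2 := by
  have hev : ∀ j, Even (L.full j i).length := by
    intro j; have := hL.ok.ev j i; simp [Cfg.full]; grind
  refine alpha E.tr hL.tr hC.tr (i := i) hjk ?_ ?_ m1 m2 hne
  · rw [Cfg.tr_full, pr_reverse _ (hev _)]; exact h1
  · rw [Cfg.tr_full, pr_reverse _ (hev _)]; exact h2

lemma beta1 (E : Env G c m) (hL : Min G m L) (hC : L.Col c) {i k} {A B q : List V} {x x' t t' : V}
    (hf : L.full i k = A ++ x :: x' :: (B ++ t :: t' :: q)) (hA : Odd A.length) (ct : c t = true)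
    (m1 : isM m s(x, x')) (m2 : isM m s(t, t')) : Done G s(x, x') s(t, t') := by
  have hx' := E.isM_mk.1 m1
  have ht' := E.isM_mk.1 m2
  obtain ⟨A', rfl⟩ : ∃ A', A = L.a i :: A' := by
    rcases A with _ | ⟨z, A⟩
    · simp at hA
    · simp [Cfg.full] at hf; exact ⟨A, by rw [hf.1]⟩
  have hA' : Even A'.length := by simp at hA; grind
  have cx : c x = false := by
    by_contra hc
    have := seg_odd E hL.ok (x := L.a i) (y := x) (p := []) (l := A')
      (q := x' :: (B ++ t :: t' :: q)) (i := i) (j := k) (by rw [hf]; simp)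
      (by rw [hC.a]; simpa using hc)
    grind
  have cx' : c x' = true := by rw [hx', E.mcol, cx]; rfl
  have hB : Odd B.length := seg_odd E hL.ok (x := x') (y := t) (p := L.a i :: A' ++ [x]) (l := B)
    (q := t' :: q) (i := i) (j := k) (by rw [hf]; simp) (by rw [cx', ct])
  have nd := hL.ok.full_nodup i k
  rw [hf] at nd
  have nd1 : (x' :: (B ++ [t])).Nodup := by
    have : L.a i :: A' ++ x :: x' :: (B ++ t :: t' :: q) =
      (L.a i :: A' ++ [x]) ++ ((x' :: (B ++ [t])) ++ t' :: q) := by simp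
    rw [this] at nd
    exact (List.nodup_append.1 (List.nodup_append.1 nd).2.1).1
  have cnt := count_chain E (x := x') (l := B ++ [t]) (by simp; grind) cx'
    (fun e he => hL.ok.adj e (TE_seg (i := i) (j := k) (p := L.a i :: A' ++ [x]) (q := t' :: q)
    (l := x' :: (B ++ [t])) (by rw [hf]; simp) he))
  have key : ∃ y ∈ x' :: (B ++ [t]), c y = false ∧ m y ∉ x' :: (B ++ [t]) := by
    refine T_lemma E (T := x' :: (B ++ [t])) (s := x') (t := t) nd1 ?_ ?_
      (by simp) (by simp) cx' ct ?_ ?_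
    · simp only [List.countP_cons, cx']; simp at cnt ⊢; omega
    · rintro rfl; simp at nd1
    · have : m x' = x := by rw [hx', E.inv]
      rw [this]
      intro h
      have : x ∈ x' :: (B ++ t :: t' :: q) := by simp at h ⊢; tauto
      exact (List.nodup_cons.1 (List.nodup_append.1 nd).2.1).1 this
    · rw [← ht']
      intro h
      have : L.a i :: A' ++ x :: x' :: (B ++ t :: t' :: q) =
        (L.a i :: A' ++ [x]) ++ ((x' :: (B ++ [t])) ++ t' :: q) := by simp
      rw [this] at nd
      exact (List.nodup_append.1 (List.nodup_append.1 nd).2.1).2.2 _ h t' (by simp) rfl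
  obtain ⟨y, hyT, cy, my⟩ := key
  have hyx : y ≠ x' := by rintro rfl; rw [cx'] at cy; simp at cy
  have hyt : y ≠ t := by rintro rfl; rw [ct] at cy; simp at cy
  have hyB : y ∈ B := by simpa [hyx, hyt] using hyT
  obtain ⟨B1, B2, rfl⟩ := List.append_of_mem hyB
  obtain ⟨A2, z, hz⟩ := (List.eq_nil_or_concat (x' :: B1)).resolve_left (by simp)
  simp only [List.concat_eq_append] at hz
  have hzz : z ∈ x' :: B1 := by rw [hz]; simp
  have ff : L.full i k = (L.a i :: A' ++ x :: A2) ++ z :: y :: (B2 ++ t :: t' :: q) := by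
    have := congrArg (fun l => L.a i :: A' ++ x :: (l ++ y :: (B2 ++ t :: t' :: q))) hz
    simp at this
    rw [hf]; simp [this]
  obtain ⟨r, w, h3, h4, h5, h6⟩ := findaux E hL.ok hC (i := i) (k := k)
    (A := L.a i :: A' ++ x :: A2) (z := z) (y := y)
    (B := B2) (t := t) (t' := t') (q := q) ff cy ct
    (by rintro h; apply my; rw [h]; simp at hzz ⊢; tauto)
    (by intro h; apply my; simp at h ⊢; tauto)
  · refine aux E hL hC h4 cy h6 h5 (Or.inr ?_)
    have : r = A' ++ x :: x' :: B1 := by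
      rw [hz]; simp at h3; simp [h3]
    rw [this, pr_append _ _ hA']; simp

lemma beta (E : Env G c m) (hL : Min G m L) (hC : L.Col c) {i k}
    (h1 : e1 ∈ pr (L.Q i k)) (h2 : e2 ∈ pr (L.full i k)) (m1 : isM m e1) (m2 : isM m e2)
    (hne : e1 ≠ e2) : Done G e1 e2 := by
  obtain ⟨r, x, x', q1, f1, hr, rfl⟩ := mem_pr.1 h1
  obtain ⟨p, t, t', q2, f2, hp, rfl⟩ := mem_pr.1 h2
  obtain ⟨T, hT, g2, ct, -⟩ := pref E hL.ok hC f2 hp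
  have hx' := E.isM_mk.1 m1
  have ht' := E.isM_mk.1 m2
  have F1 : L.full i k = (L.a i :: r) ++ x :: x' :: (q1 ++ [L.b k]) := by
    rw [Cfg.full, f1]; simp
  have htx : t ≠ x := by rintro rfl; exact hne (by rw [hx', ht'])
  have htx' : t ≠ x' := by
    rintro rfl; apply hne; rw [ht', hx', E.inv, Sym2.eq_swap]
  have htb : t ≠ L.b k := by rintro rfl; rw [hC.b] at ct; simp at ct
  have nd := hL.ok.full_nodup i k
  have htf : t ∈ L.full i k := by rw [f2]; simp
  have : t ∈ L.a i :: r ∨ t ∈ q1 := by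
    rw [F1] at htf
    simp [htx, htx', htb] at htf ⊢; tauto
  rcases this with h | h
  · obtain ⟨p', B, hpB⟩ := List.append_of_mem h
    rw [hpB] at F1
    have F1' : L.full i k = p' ++ t :: (B ++ x :: x' :: (q1 ++ [L.b k])) := by rw [F1]; simp
    have nd' := nd
    rw [f2] at nd' F1'
    obtain ⟨rfl, hB⟩ := nodup_split nd' F1'
    rcases B with _ | ⟨b, B⟩
    · exfalso
      simp at hB
      have : m x = t := by rw [← hB.1, ht', E.inv]
      rw [← hx'] at this; exact htx' this.symm
    simp at hB
    obtain ⟨rfl, rfl⟩ := hB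
    have hlen := congrArg List.length f1
    have hev := hL.ok.ev i k
    have hl2 := congrArg List.length hpB
    refine (Sym2.eq_swap (a := x) (b := x')) ▸ (Sym2.eq_swap (a := t) (b := t')) ▸
      beta1 E.tr hL.tr hC.tr (i := k) (k := i) (A := (q1 ++ [L.b k]).reverse) (B := B.reverse)
      (x := x') (x' := x) (t := t') (t' := t) (q := p.reverse) ?_ ?_ ?_ ?_ ?_
    · rw [Cfg.tr_full, f2]; simp
    · simp at hlen ⊢; grind
    · rw [ht', E.mcol, ct]; rfl
    · rw [Sym2.eq_swap]; exact m1
    · rw [Sym2.eq_swap]; exact m2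
  · obtain ⟨B, q3, rfl⟩ := List.append_of_mem h
    have F1' : L.full i k = (L.a i :: r ++ x :: x' :: B) ++ t :: (q3 ++ [L.b k]) := by
      rw [F1]; simp
    have nd' := nd
    rw [f2] at nd' F1'
    obtain ⟨rfl, hB⟩ := nodup_split nd' F1'
    refine beta1 E hL hC (i := i) (k := k) (A := L.a i :: r) (B := B) (q := q2) ?_ ?_ ct m1 m2
    · rw [F1]; simp [hB]
    · simp; grind

/-- both edges in the union: done -/
lemma both (E : Env G c m) (hL : Min G m L) (hC : L.Col c) (h1 : e1 ∈ L.TE) (h2 : e2 ∈ L.TE)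
    (m1 : isM m e1) (m2 : isM m e2) (hne : e1 ≠ e2) : Done G e1 e2 := by
  rcases TE_cases hL.ok h1 with h1' | ⟨i, j, h1'⟩
  · exact done_N hL.ok h1' h2
  rcases TE_cases hL.ok h2 with h2' | ⟨k, l, h2'⟩
  · exact (done_N hL.ok h2' h1).symm
  rcases h1' with h1' | h1' <;> rcases h2' with h2' | h2'
  · by_cases hik : i = k <;> by_cases hjl : j = l
    · exact done_I_I hL.ok h1' h2' (by simp [hik, hjl])
    · subst hik; exact alpha E hL hC hjl h1' h2' m1 m2 hne
    · subst hjl; exact alpha' E hL hC hik h1' h2' m1 m2 hne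
    · exact done_I_I hL.ok h1' h2' (by simp [hik, hjl])
  · by_cases h : i = k ∧ j = l
    · obtain ⟨rfl, rfl⟩ := h
      exact (beta E hL hC h2' h1' m2 m1 hne.symm).symm
    · exact done_I_II hL.ok h1' h2' (by tauto)
  · by_cases h : i = k ∧ j = l
    · obtain ⟨rfl, rfl⟩ := h
      exact beta E hL hC h1' h2' m1 m2 hne
    · exact (done_I_II hL.ok h2' h1' (by grind)).symm
  · exact done_II_II hL.ok h1' h2'

end
end K
end Paper

namespace Paper
namespace K
open Classical

variable {V : Type*}

section
variable {G : SimpleGraph V} {c : V → Bool} {m : V → V} {L L' : Cfg V} {u v : V} {R S : List V}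
  {N0 P D : Multiset (Sym2 V)} {e e1 e2 : Sym2 V}

lemma full_TE {i j} (h : e ∈ pr (L.full i j)) : e ∈ L.TE :=
  Cfg.mem_TE.2 (Or.inl ⟨i, j, pr_le_we _ h⟩)

lemma exch0 (E : Env G c m) (hL : Min G m L) (hC : L.Col c) (hE : Ear c m L u R v N0) {i j k l}
    (hik : i ≠ k) (hjl : j ≠ l) (hu : u ∈ L.Q i j) (hv : v ∈ L.Q k l) :
    ∃ L', Min G m L' ∧ L'.Col c ∧ (∀ e ∈ pr (u :: (R ++ [v])), e ∈ L'.TE) ∧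
      (∀ e ∈ L.TE, e ∉ pr (L.full i l) → e ∈ L'.TE) ∧ (∀ e ∈ pr (L.full i l), isM m e) := by
  obtain ⟨σ, rfl, rfl⟩ := perm2 _ _ hik
  obtain ⟨τ, rfl, rfl⟩ := perm2 _ _ hjl.symm
  obtain ⟨p, q, r, w, X⟩ := stuck' E (hL.rl σ τ) (hC.rl σ τ) (hE.rl σ τ) hu hv
  refine ⟨_, X.min, X.col, ?_, ?_, X.full⟩
  · intro e he
    have h1 : e ∈ (L.rl σ τ).TE + pr (u :: (R ++ [v])) := Multiset.mem_add.2 (Or.inr he)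
    rw [← X.step.TE, Multiset.mem_add] at h1
    refine h1.resolve_right (fun h => hE.nt e he ?_)
    exact full_TE (i := σ 0) (j := τ 0) h
  · intro e he hn
    have h1 : e ∈ (L.rl σ τ).TE + pr (u :: (R ++ [v])) :=
      Multiset.mem_add.2 (Or.inl (by simpa using he))
    rw [← X.step.TE, Multiset.mem_add] at h1
    exact h1.resolve_right hn

lemma avoid (E : Env G c m) {D : List V} (hm : ∀ x ∈ D, m x ∈ D) {z : V} (S : List V)
    (hS : Even S.length) (y : V) (hy : y ∉ D) (h1 : ∀ e ∈ pr (y :: (S ++ [z])), isM m e)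
    (h2 : ∀ a b, s(a, b) ∈ pr S → b ∈ D → a ∈ D) : ∀ x ∈ y :: (S ++ [z]), x ∉ D := by
  have hm' : ∀ x, x ∉ D → m x ∉ D := by
    intro x hx h
    have := hm _ h
    rw [E.inv] at this
    exact hx this
  revert y
  revert h2
  refine even_ind (P := fun S => (∀ a b, s(a, b) ∈ pr S → b ∈ D → a ∈ D) → ∀ y, y ∉ D →
    (∀ e ∈ pr (y :: (S ++ [z])), isM m e) → ∀ x ∈ y :: (S ++ [z]), x ∉ D) ?_ ?_ S hS
  · intro _ y hy h x hx
    have := E.isM_mk.1 (h s(y, z) (by simp))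
    simp at hx
    rcases hx with rfl | rfl
    · exact hy
    · rw [this]; exact hm' _ hy
  · intro x1 x2 S _ ih h2 y hy h1
    have k1 : x1 ∉ D := by rw [E.isM_mk.1 (h1 s(y, x1) (by simp))]; exact hm' _ hy
    have k2 : x2 ∉ D := fun h => k1 (h2 x1 x2 (by simp) h)
    have := ih (fun a b h => h2 a b (by simp [h])) x2 k2 (fun e he => h1 e (by
      simp only [List.cons_append, pr_cons2]; exact Multiset.mem_cons_of_mem he))
    intro x hx
    simp only [List.cons_append, List.mem_cons] at hx
    rcases hx with rfl | rfl | hx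
    · exact hy
    · exact k1
    · exact this x (by simpa using hx)

lemma Ear.len (hE : Ear c m L u R v N0) : Even (u :: (R ++ [v])).length := by
  have := hE.ev; simp; grind

lemma Ear.R_nv (hE : Ear c m L u R v N0) {x} (hx : x ∈ R) : x ∈ nv L.N := by
  rw [hE.hN, nv_add, nv_pr _ hE.ev]; simp [hx]

/-- two ears with different ends are disjoint -/
lemma ear_disj (E : Env G c m) (hL : L.Ok G) (hE : Ear c m L u R v N0) {u2 R2 y N2}
    (hE2 : Ear c m L u2 R2 y N2) (hy : y ≠ v) : ∀ x ∈ u2 :: (R2 ++ [y]), x ∉ u :: (R ++ [v]) := by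
  have := avoid E (D := u :: (R ++ [v])) (fun x hx => (pr_closed E hE.len hE.inM hx).1)
    (z := u2) R2.reverse (by simpa using hE2.ev) y ?_ ?_ ?_
  · intro x hx
    apply this x
    simp at hx ⊢; tauto
  · intro h
    simp [hy] at h
    rcases h with rfl | h
    · have := hE.cu; rw [hE2.cv] at this; simp at this
    · exact hE2.hv (hE.R_nv h)
  · rw [pr_ear_rev hE2.ev]; exact hE2.inM
  · intro a b h hb
    rw [pr_reverse _ hE2.ev] at h
    have hN : s(a, b) ∈ L.N := by rw [hE2.hN]; simp [h]
    have hbN : b ∈ nv L.N := mem_nv.2 ⟨_, hN, by simp⟩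
    have hbR : b ∈ R := by
      simp at hb
      rcases hb with rfl | h | rfl
      · exact (hE.hu hbN).elim
      · exact h
      · exact (hE.hv hbN).elim
    have : b ∈ nv (pr R) := by rw [nv_pr _ hE.ev]; exact hbR
    obtain ⟨f, hf, hbf⟩ := mem_nv.1 this
    have := N_uniq hL (x := b) hN (e' := f) (by rw [hE.hN]; simp [hf]) (by simp) hbf
    subst this
    have := mem_of_pr hf (x := a) (by simp)
    simp [this]

/-- existence of a second ear -/
lemma gamma0 (E : Env G c m) (hL : Min G m L) (hC : L.Col c) (hE : Ear c m L u R v N0) {i j k l}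
    (hik : i ≠ k) (hjl : j ≠ l) (hu : u ∈ L.Q i j) (hv : v ∈ L.Q k l)
    (hD : ∀ e ∈ pr (L.full i l), isM m e) : ∃ r y w, L.Q i j = r ++ y :: w ∧ u ∈ w ∧
      c y = false ∧ s(y, m y) ∉ L.TE := by
  obtain ⟨p, q, hQ⟩ := List.append_of_mem hu
  have hf : L.full i j = L.a i :: (p ++ u :: (q ++ [L.b j])) := by simp [Cfg.full, hQ]
  have nd := hL.ok.full_nodup i j
  rw [hf] at nd
  have hp : Odd p.length := seg_odd E hL.ok (x := L.a i) (y := u) (p := []) (l := p)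
    (q := q ++ [L.b j]) (i := i) (j := j) (by rw [hf]; simp) (by rw [hC.a, hE.cu])
  have cnt := count_chain E (x := L.a i) (l := p ++ [u]) (by simp; grind) (hC.a i)
    (fun e he => hL.ok.adj e (TE_seg (i := i) (j := j) (p := []) (q := q ++ [L.b j])
    (l := L.a i :: (p ++ [u])) (by rw [hf]; simp) he))
  have hTQ : ∀ x ∈ p ++ [u], x ∈ L.Q i j := by
    intro x hx; rw [hQ]; simp at hx ⊢; tauto
  have key : ∃ y ∈ L.a i :: (p ++ [u]), c y = false ∧ m y ∉ L.a i :: (p ++ [u]) := by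
    refine T_lemma E (s := L.a i) (t := u) ?_ ?_ ?_ (by simp) (by simp) (hC.a i) hE.cu ?_ ?_
    · have : L.a i :: (p ++ u :: (q ++ [L.b j])) = (L.a i :: (p ++ [u])) ++ (q ++ [L.b j]) := by
        simp
      rw [this] at nd
      exact (List.nodup_append.1 nd).1
    · simp [hC.a] at cnt ⊢; omega
    · rintro h; exact hL.ok.a_nQ (h ▸ hu)
    · intro h
      have h1 : m (L.a i) ∈ L.full i l := by
        refine (pr_closed E ?_ hD (by simp [Cfg.full])).1
        have := hL.ok.ev i l
        simp [Cfg.full]; grind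
      rcases List.mem_cons.1 h with h2 | h2
      · exact (E.adj (L.a i)).ne h2.symm
      · exact hjl (hL.ok.Q_full (hTQ _ h2) h1).2
    · intro h
      have h1 : m u ∈ u :: (R ++ [v]) := (pr_closed E hE.len hE.inM (by simp)).1
      have h2 : m u ∈ L.full i j := by rw [hf]; simp at h ⊢; tauto
      simp only [List.mem_cons, List.mem_append, List.mem_nil_iff, or_false] at h1
      rcases h1 with h1 | h1 | h1
      · exact (E.adj u).ne h1.symm
      · exact hL.ok.full_nN h2 (hE.R_nv h1)
      · rw [h1] at h2
        exact hik (hL.ok.Q_full hv h2).1.symm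
  obtain ⟨y, hyT, cy, my⟩ := key
  obtain ⟨s', q', hs'⟩ : ∃ s' q', q ++ [L.b j] = s' :: q' := by
    cases q <;> simp
  have hya : y ≠ L.a i := by rintro rfl; rw [hC.a] at cy; simp at cy
  obtain ⟨r, w, h1, h2, h3⟩ := findhalf E hL.ok hC (i := i) (j := j) (p := L.a i :: p) (s := u)
    (s' := s') (q := q') (T := p ++ [u]) (by rw [hf, hs']; simp) (by simp) hE.cu
    (by simpa [hya] using hyT) cy my
  refine ⟨r, y, w, h1, ?_, cy, h3⟩
  have := mem_of_pr h2 (x := u) (by simp)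
  rcases List.mem_append.1 this with h | h
  · exact h
  · simp at h
    exact (hL.ok.b_nQ (h ▸ hu)).elim

lemma gamma (E : Env G c m) (hL : Min G m L) (hC : L.Col c) (hE : Ear c m L u R v N0) {i j k l}
    (hik : i ≠ k) (hjl : j ≠ l) (hu : u ∈ L.Q i j) (hv : v ∈ L.Q k l)
    (h2 : e2 ∈ pr (u :: (R ++ [v]))) (h1 : e1 ∈ pr (L.full i l))
    (m1 : isM m e1) (m2 : isM m e2) (hne : e1 ≠ e2) : Done G e1 e2 := by
  obtain ⟨-, -, -, -, -, hD⟩ := exch0 E hL hC hE hik hjl hu hv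
  obtain ⟨r, y, w, hQ, huw, cy, hyT⟩ := gamma0 E hL hC hE hik hjl hu hv hD
  have hyQ : y ∈ L.Q i j := by rw [hQ]; simp
  obtain ⟨u2, R2, N2, hE2⟩ := ear_vert E hL cy (hL.ok.Q_nN hyQ) hyT
  have hyv : y ≠ v := by rintro rfl; exact hik (hL.ok.Q_inj hyQ hv).1
  have dis := ear_disj E hL.ok hE hE2 hyv
  obtain ⟨i', j', k', l', hik', hjl', hu2, hy2⟩ := stuck E hL hC hE2
  obtain ⟨rfl, rfl⟩ := hL.ok.Q_inj hyQ hy2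
  obtain ⟨σ, rfl, rfl⟩ := perm2 _ _ hik'
  obtain ⟨τ, rfl, rfl⟩ := perm2 _ _ hjl'.symm
  obtain ⟨k, rfl⟩ := σ.surjective k
  obtain ⟨l, rfl⟩ := τ.surjective l
  have hk : k ≠ 1 := by rintro rfl; exact hik rfl
  have hl : l ≠ 0 := by rintro rfl; exact hjl rfl
  replace h1 : e1 ∈ pr ((L.rl σ τ).full 1 l) := h1
  replace hv : v ∈ (L.rl σ τ).Q k l := hv
  replace hu2 : u2 ∈ (L.rl σ τ).Q 0 1 := hu2
  replace hy2 : y ∈ (L.rl σ τ).Q 1 0 := hy2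
  replace hQ : (L.rl σ τ).Q 1 0 = r ++ y :: w := hQ
  replace hE := hE.rl σ τ
  replace hE2 := hE2.rl σ τ
  replace hL := hL.rl σ τ
  replace hC := hC.rl σ τ
  clear hyT hyQ hik hjl hik' hjl' hu hD
  generalize L.rl σ τ = L at *
  obtain ⟨p, q, r', w', X⟩ := stuck' E hL hC hE2 hu2 hy2
  have hn := hL.ok.Q_nodup 1 0
  have := X.hv
  rw [hQ] at this hn
  obtain ⟨rfl, rfl⟩ := nodup_split hn this
  obtain ⟨hL', hC', hN', hT'⟩ := (⟨X.min, X.col, X.step.N, X.step.TE⟩ : _ ∧ _ ∧ _ ∧ _)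
  have hu' : u ∈ (C4 L u2 R2 y p q r w N2).Q 2 0 := by
    show u ∈ L.Q 2 0 ++ L.b 0 :: w.reverse
    simp [huw]
  have h1' : e1 ∈ pr ((C4 L u2 R2 y p q r w N2).full 1 l) := by
    fin_cases l
    · simp at hl
    · exact h1
    · exact h1
  generalize C4 L u2 R2 y p q r w N2 = L' at *
  have hle : pr R ≤ N2 := by
    rw [Multiset.le_iff_count]
    intro e
    by_cases he : e ∈ pr R
    · have : e ∉ pr R2 := by
        intro h
        obtain ⟨x, hx⟩ : ∃ x, x ∈ e := by induction e with | _ a b => exact ⟨a, by simp⟩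
        refine dis x ?_ ?_
        · have := mem_of_pr h hx; simp [this]
        · have := mem_of_pr he hx; simp [this]
      have h3 := congrArg (Multiset.count e) (hE.hN.symm.trans hE2.hN)
      rw [Multiset.count_add, Multiset.count_add, Multiset.count_eq_zero.2 this] at h3
      omega
    · rw [Multiset.count_eq_zero.2 he]; omega
  obtain ⟨N3, rfl⟩ := Multiset.le_iff_exists_add.1 hle
  have hE' : Ear c m L' u R v (N3 + pr (L.Q 0 0)) := by
    refine ⟨hE.cu, hE.cv, hL'.ok.Q_nN hu', ?_, hE.ev, by rw [hN', add_assoc], hE.inM, ?_⟩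
    · rw [hN', nv_add, Multiset.mem_add]
      rintro (h | h)
      · apply hE.hv; rw [hE2.hN, nv_add]; exact Multiset.mem_add.2 (Or.inr h)
      · rw [nv_pr _ (hL.ok.ev 0 0)] at h
        exact hl (hL.ok.Q_inj hv h).2
    · intro e he hT
      have h3 : e ∈ L'.TE + pr (L.full 0 0) := Multiset.mem_add.2 (Or.inl hT)
      rw [hT', Multiset.mem_add] at h3
      refine h3.elim (hE.nt e he) (fun h => ?_)
      obtain ⟨x, hx⟩ : ∃ x, x ∈ e := by induction e with | _ a b => exact ⟨a, by simp⟩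
      exact dis x (mem_of_pr h hx) (mem_of_pr he hx)
  obtain ⟨i1, j1, k1, l1, hik, hjl, hu1, hv1⟩ := stuck E hL' hC' hE'
  obtain ⟨rfl, rfl⟩ := hL'.ok.Q_inj hu' hu1
  obtain ⟨L'', g1, g2, g3, g4, -⟩ := exch0 E hL' hC' hE' hik hjl hu1 hv1
  refine both E g1 g2 (g4 e1 (full_TE h1') ?_) (g3 e2 h2) m1 m2 hne
  intro h
  obtain ⟨x, rfl⟩ := m1
  have key : ∀ z, z ∈ L'.full 1 l → z ∈ L'.full 2 l1 → z = L'.b l := by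
    intro z hz hz'
    rw [Cfg.mem_full] at hz
    rcases hz with h | h | h
    · rw [h] at hz'
      exact absurd (hL'.ok.a_full hz') (by simp)
    · exact absurd (hL'.ok.Q_full h hz').1 (by simp)
    · exact h
  have k1 := key x (mem_of_pr h1' (by simp)) (mem_of_pr h (by simp))
  have k2 := key (m x) (mem_of_pr h1' (by simp)) (mem_of_pr h (by simp))
  exact (E.adj x).ne (k1.trans k2.symm)

lemma one (E : Env G c m) (hL : Min G m L) (hC : L.Col c) (h1 : e1 ∈ L.TE)
    (m1 : isM m e1) (m2 : isM m e2) (hne : e1 ≠ e2) : Done G e1 e2 := by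
  by_cases h2 : e2 ∈ L.TE
  · exact both E hL hC h1 h2 m1 m2 hne
  obtain ⟨u, R, v, N0, hE, h3⟩ := ear_edge E hL m2 h2
  obtain ⟨i, j, k, l, hik, hjl, hu, hv⟩ := stuck E hL hC hE
  by_cases h4 : e1 ∈ pr (L.full i l)
  · exact gamma E hL hC hE hik hjl hu hv h3 h4 m1 m2 hne
  · obtain ⟨L'', g1, g2, g3, g4, -⟩ := exch0 E hL hC hE hik hjl hu hv
    exact both E g1 g2 (g4 e1 h1 h4) (g3 e2 h3) m1 m2 hne

lemma main (E : Env G c m) (hL : Min G m L) (hC : L.Col c)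
    (m1 : isM m e1) (m2 : isM m e2) (hne : e1 ≠ e2) : Done G e1 e2 := by
  by_cases h1 : e1 ∈ L.TE
  · exact one E hL hC h1 m1 m2 hne
  obtain ⟨u, R, v, N0, hE, h3⟩ := ear_edge E hL m1 h1
  obtain ⟨i, j, k, l, hik, hjl, hu, hv⟩ := stuck E hL hC hE
  obtain ⟨L'', g1, g2, g3, g4, -⟩ := exch0 E hL hC hE hik hjl hu hv
  exact one E g1 g2 (g3 e1 h3) m1 m2 hne

end
end K
end Paper

namespace Paper
namespace K
open Classical

variable {V : Type*}

section
variable {G : SimpleGraph V} {c : V → Bool} {m : V → V} {L L' : Cfg V} {u v : V} {R S : List V}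
  {N0 P D : Multiset (Sym2 V)} {e e1 e2 : Sym2 V}

lemma sum_nodup {ι : Type*} (s : Finset ι) (f : ι → Multiset V) (h1 : ∀ i ∈ s, (f i).Nodup)
    (h2 : ∀ i ∈ s, ∀ j ∈ s, ∀ x, x ∈ f i → x ∈ f j → i = j) : (∑ i ∈ s, f i).Nodup := by
  rw [Multiset.nodup_iff_count_le_one]
  intro x
  rw [Multiset.count_sum']
  by_cases h : ∃ i ∈ s, x ∈ f i
  · obtain ⟨i, hi, hx⟩ := h
    rw [Finset.sum_eq_single_of_mem i hi]
    · exact Multiset.nodup_iff_count_le_one.1 (h1 i hi) x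
    · intro j hj hji
      exact Multiset.count_eq_zero.2 (fun hxj => hji (h2 j hj i hi x hxj hx))
  · push Not at h
    rw [Finset.sum_eq_zero]
    · omega
    · intro i hi
      exact Multiset.count_eq_zero.2 (h i hi)

lemma nv_uniq {N : Multiset (Sym2 V)} (hnd : (nv N).Nodup) {x : V} {e e' : Sym2 V} (he : e ∈ N)
    (he' : e' ∈ N) (hx : x ∈ e) (hx' : x ∈ e') : e = e' := by
  by_contra hne
  obtain ⟨N1, hN1⟩ := Multiset.exists_cons_of_mem he
  have : e' ∈ N1 := by
    rw [hN1, Multiset.mem_cons] at he'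
    exact he'.resolve_left (fun h => hne h.symm)
  have hx1 : x ∈ nv N1 := mem_nv.2 ⟨e', this, hx'⟩
  rw [hN1] at hnd
  induction e with
  | _ a b =>
    rw [nv_cons, Multiset.nodup_cons, Multiset.nodup_cons, Multiset.mem_cons] at hnd
    rw [Sym2.mem_iff] at hx
    rcases hx with rfl | rfl
    · exact hnd.1 (Or.inr hx1)
    · exact hnd.2.1 hx1

lemma we_support {x y : V} (W : G.Walk x y) : we W.support = (W.edges : Multiset (Sym2 V)) := by
  induction W with
  | nil => simp
  | cons h W ih =>
    cases W with
    | nil => simp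
    | cons h' W =>
      simp only [SimpleGraph.Walk.support_cons, SimpleGraph.Walk.edges_cons, we_cons2] at ih ⊢
      rw [ih]; simp

lemma support_split {x y : V} (W : G.Walk x y) (h : Odd W.length) :
    x :: (W.support.tail.dropLast ++ [y]) = W.support ∧ Even W.support.tail.dropLast.length := by
  have h0 : W.support.tail ≠ [] := by
    intro h0
    have := congrArg List.length h0
    rw [List.length_tail, SimpleGraph.Walk.length_support] at this
    have h5 : W.length = 0 := by
      have h6 : ([] : List V).length = 0 := rfl
      omega
    rw [h5] at h; simp at h
  constructor
  · have h1 := List.dropLast_append_getLast h0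
    have h2 : W.support.tail.getLast h0 = y := by
      rw [List.getLast_tail]; simp
    rw [h2] at h1
    rw [h1]
    exact SimpleGraph.Walk.cons_tail_support W
  · simp; grind

lemma exists_walk : ∀ (l : List V) (x y : V), (∀ e ∈ we (x :: (l ++ [y])), e ∈ G.edgeSet) →
    ∃ W : G.Walk x y, W.support = x :: (l ++ [y])
  | [], x, y, h => by
    have : G.Adj x y := by simpa using h
    exact ⟨.cons this .nil, by simp⟩
  | z :: l, x, y, h => by
    simp only [List.cons_append, we_cons2, Multiset.mem_cons, forall_eq_or_imp] at h
    obtain ⟨W, hW⟩ := exists_walk l z y h.2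
    have hx : G.Adj x z := h.1
    exact ⟨.cons hx W, by simp [hW]⟩

/-- The coverage of the vertex set by `ML`. -/
lemma nv_ML (hL : L.Ok G) (σ : Equiv.Perm (Fin 3)) : nv (ML L σ) = L.VT := by
  have hs : ∀ (f : Fin 3 → Fin 3 → Multiset (Sym2 V)),
      nv (∑ i, ∑ j, f i j) = ∑ i, ∑ j, nv (f i j) := by
    intro f; simp [Fin.sum_univ_three]
  have h1 : ∀ i j, nv (if σ i = j then pr (L.full i j) else pr (L.Q i j)) =
      (L.Q i j : Multiset V) + (if σ i = j then {L.a i} + {L.b j} else 0) := by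
    intro i j
    split_ifs
    · rw [nv_pr]
      · simp only [Cfg.full, ← Multiset.cons_coe, ← Multiset.coe_add, ← Multiset.singleton_add,
          Multiset.coe_nil, add_zero]
        abel
      · have := hL.ev i j
        simp [Cfg.full]; grind
    · rw [nv_pr _ (hL.ev i j), add_zero]
  rw [ML, nv_add, hs]
  simp only [h1, Finset.sum_add_distrib, Finset.sum_ite_eq, Finset.mem_univ, if_true]
  rw [Equiv.sum_comp σ (fun i => ({L.b i} : Multiset V)), Cfg.VT]
  abel

lemma ML_TE (hL : L.Ok G) {σ : Equiv.Perm (Fin 3)} (h : e ∈ ML L σ) :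
    e ∈ L.N ∨ ∃ i j, e ∈ we (L.full i j) := by
  rcases mem_ML.1 h with h | ⟨i, j, ⟨_, h⟩ | ⟨_, h⟩⟩
  · exact Or.inl h
  · exact Or.inr ⟨i, j, pr_le_we _ h⟩
  · refine Or.inr ⟨i, j, ?_⟩
    rw [Cfg.full, we_eq _ _ _ (hL.ev i j)]
    exact Multiset.mem_add.2 (Or.inr h)

lemma ML_pm (hL : L.Ok G) (σ : Equiv.Perm (Fin 3)) : IsPM G {e | e ∈ ML L σ} := by
  have hv := nv_ML hL σ
  refine ⟨?_, fun _ _ _ _ => trivial, ?_⟩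
  · intro e he
    apply hL.adj
    exact Cfg.mem_TE.2 ((ML_TE hL he).symm)
  · intro v _
    obtain ⟨e, he, hve⟩ := mem_nv.1 (hv.symm ▸ hL.all v)
    refine ⟨e, ⟨he, hve⟩, ?_⟩
    rintro e' ⟨he', hve'⟩
    exact nv_uniq (hv.symm ▸ hL.nodup) he' he hve' hve

def lk {a b : Fin 3 → V} (wk : ∀ i j, G.Walk (a i) (b j)) :
    ∀ x y : Fin 3 ⊕ Fin 3, K33.Adj x y → G.Walk (Sum.elim a b x) (Sum.elim a b y)
  | .inl i, .inr j, _ => wk i j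
  | .inr j, .inl i, _ => (wk i j).reverse
  | .inl _, .inl _, h => absurd h (by simp)
  | .inr _, .inr _, h => absurd h (by simp)

lemma lk_cases {a b : Fin 3 → V} (wk : ∀ i j, G.Walk (a i) (b j)) {x y : Fin 3 ⊕ Fin 3}
    (h : K33.Adj x y) : ∃ i j, s(x, y) = s(.inl i, .inr j) ∧
      (∀ v, v ∈ (lk wk x y h).support ↔ v ∈ (wk i j).support) ∧
      (∀ e, e ∈ (lk wk x y h).edges ↔ e ∈ (wk i j).edges) ∧
      ((lk wk x y h).IsPath ↔ (wk i j).IsPath) ∧ (lk wk x y h).length = (wk i j).length := by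
  rcases x with i | i <;> rcases y with j | j
  · simp at h
  · exact ⟨i, j, rfl, fun _ => Iff.rfl, fun _ => Iff.rfl, Iff.rfl, rfl⟩
  · refine ⟨j, i, Sym2.eq_swap, ?_, ?_, ?_, ?_⟩ <;> simp [lk]
  · simp at h

lemma exists_bisub (hL : L.Ok G) : ∃ B : Bisubdivision K33 G,
    (∀ v, v ∈ B.verts → ∃ i j, v ∈ L.full i j) ∧ ∀ i j e, e ∈ we (L.full i j) → e ∈ B.edgeSet := by
  have hw : ∀ i j, ∃ W : G.Walk (L.a i) (L.b j), W.support = L.full i j :=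
    fun i j => exists_walk (L.Q i j) _ _ (hL.full_adj i j)
  choose wk hwk using hw
  have bvm : ∀ i j z, Sum.elim L.a L.b z ∈ L.full i j → z = .inl i ∨ z = .inr j := by
    rintro i j (k | k) h
    · left; rw [hL.a_full h]
    · right; rw [hL.b_full h]
  refine ⟨⟨Sum.elim L.a L.b, ?_, fun x y h => lk wk x y h, ?_, ?_, ?_, ?_, ?_⟩, ?_, ?_⟩
  · rintro (i | i) (j | j) h
    · rw [hL.a_inj h]
    · exact (hL.a_ne_b h).elim
    · exact (hL.a_ne_b h.symm).elim
    · rw [hL.b_inj h]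
  · intro x y h
    obtain ⟨i, j, -, -, -, hp, -⟩ := lk_cases wk h
    rw [hp, SimpleGraph.Walk.isPath_def, hwk]
    exact hL.full_nodup i j
  · intro x y h
    obtain ⟨i, j, -, -, -, -, hl⟩ := lk_cases wk h
    have h1 := congrArg List.length (hwk i j)
    have h2 := hL.ev i j
    simp [Cfg.full] at h1
    simp only [hl]
    grind
  · rintro (i | i) (j | j) h
    · simp at h
    · rfl
    · simp [lk]
    · simp at h
  · intro x y h z hz
    obtain ⟨i, j, hs, hv, -⟩ := lk_cases wk h
    rw [hv, hwk] at hz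
    have := bvm i j z hz
    rw [Sym2.eq_iff] at hs
    rcases hs with ⟨rfl, rfl⟩ | ⟨rfl, rfl⟩ <;> tauto
  · intro x y x' y' h h' hne v hv hv'
    obtain ⟨i, j, hs, hiff, -⟩ := lk_cases wk h
    obtain ⟨i', j', hs', hiff', -⟩ := lk_cases wk h'
    rw [hiff, hwk] at hv
    rw [hiff', hwk] at hv'
    have hij : ¬ (i = i' ∧ j = j') := by
      rintro ⟨rfl, rfl⟩; exact hne (hs.trans hs'.symm)
    have key : (v = L.a i ∨ v = L.b j) ∧ (v = L.a i' ∨ v = L.b j') := by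
      constructor
      · rw [Cfg.mem_full] at hv
        rcases hv with h | h | h
        · exact Or.inl h
        · exact (hij (hL.Q_full h hv')).elim
        · exact Or.inr h
      · rw [Cfg.mem_full] at hv'
        rcases hv' with h | h | h
        · exact Or.inl h
        · have := hL.Q_full h hv; exact (hij ⟨this.1.symm, this.2.symm⟩).elim
        · exact Or.inr h
    rw [Sym2.eq_iff] at hs hs'
    refine ⟨?_, ?_⟩
    · rcases hs with ⟨rfl, rfl⟩ | ⟨rfl, rfl⟩
      · exact key.1
      · exact key.1.symm
    · rcases hs' with ⟨rfl, rfl⟩ | ⟨rfl, rfl⟩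
      · exact key.2
      · exact key.2.symm
  · rintro v ⟨x, y, h, hv⟩
    obtain ⟨i, j, -, hiff, -⟩ := lk_cases wk h
    refine ⟨i, j, ?_⟩
    rw [← hwk, ← hiff]
    exact hv
  · intro i j e he
    refine ⟨.inl i, .inr j, by simp, ?_⟩
    rw [← hwk, we_support] at he
    exact he

lemma final (hL : L.Ok G) (σ : Equiv.Perm (Fin 3)) :
    ∃ B : Bisubdivision K33 G, B.MConformal {e | e ∈ ML L σ} := by
  obtain ⟨B, h1, h2⟩ := exists_bisub hL
  refine ⟨B, fun v hv => ?_⟩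
  obtain ⟨i, j, hv⟩ := h1 v hv
  obtain ⟨e, ⟨he, hve⟩, hu⟩ := (ML_pm hL σ).2.2 v trivial
  refine ⟨e, ⟨he, ?_, hve⟩, fun e' he' => hu e' ⟨he'.1, he'.2.2⟩⟩
  rcases ML_TE hL he with h | ⟨k, l, h⟩
  · exact (hL.full_nN hv (mem_nv.2 ⟨e, h, hve⟩)).elim
  · exact h2 k l e h

lemma exists_col (E : Env G c m) (hL : L.Ok G) : ∃ c', Env G c' m ∧ L.Col c' := by
  have h : ∀ i j, c (L.a i) = !c (L.b j) := by
    intro i j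
    have h1 := E.par (L.Q i j) (L.a i) (L.b j) (hL.full_adj i j)
    have h2 := hL.ev i j
    have h3 : c (L.a i) ≠ c (L.b j) := by
      intro h; rw [h1] at h; grind
    revert h3
    cases c (L.a i) <;> cases c (L.b j) <;> simp
  cases h0 : c (L.a 0) with
  | true =>
    have hb : ∀ j, c (L.b j) = false := fun j => by have := h 0 j; rw [h0] at this; simpa using this.symm
    exact ⟨c, E, fun i => by rw [h i 0, hb]; rfl, hb⟩
  | false =>
    have hb : ∀ j, c (L.b j) = true := fun j => by have := h 0 j; rw [h0] at this; simpa using this.symm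
    exact ⟨_, E.tr, fun i => by simp [h i 0, hb], fun j => by simp [hb]⟩

lemma exists_env (hb : IsBipartite G) {M : Set (Sym2 V)} (hM : IsPM G M) :
    ∃ c m, Env G c m ∧ ∀ e ∈ M, isM m e := by
  obtain ⟨V1, V2, hd, hu, ha⟩ := hb
  have h : ∀ v, ∃ w, s(v, w) ∈ M := by
    intro v
    obtain ⟨e, ⟨he, hv⟩, -⟩ := hM.2.2 v trivial
    obtain ⟨w, rfl⟩ := Sym2.mem_iff_exists.1 hv
    exact ⟨w, he⟩
  choose m hm using h
  have huq : ∀ v e e', e ∈ M → e' ∈ M → v ∈ e → v ∈ e' → e = e' := by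
    intro v e e' he he' hv hv'
    exact (hM.2.2 v trivial).unique ⟨he, hv⟩ ⟨he', hv'⟩
  refine ⟨fun v => decide (v ∈ V1), m, ⟨?_, ?_, ?_⟩, ?_⟩
  · intro x y hxy
    have h1 := ha hxy
    have h2 : y ∈ V2 ↔ ¬ y ∈ V1 := by
      constructor
      · intro h h'; exact Set.disjoint_left.1 hd h' h
      · intro h
        have : y ∈ V1 ∪ V2 := by rw [hu]; trivial
        exact this.resolve_left h
    by_cases h3 : y ∈ V1 <;> simp [h3, h1, h2]
  · intro x
    have := huq (m x) _ _ (hm x) (hm (m x)) (by simp) (by simp)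
    rw [Sym2.eq_swap, Sym2.congr_right] at this
    exact this.symm
  · intro x; exact hM.1 _ (hm x)
  · intro e he
    obtain ⟨x, hx⟩ : ∃ x, x ∈ e := by induction e with | _ a b => exact ⟨a, by simp⟩
    exact ⟨x, huq x _ _ he (hm x) hx (by simp)⟩

lemma exists_ok [Fintype V] (B : Bisubdivision K33 G) (hB : B.ConformalOn Set.univ) :
    ∃ L : Cfg V, L.Ok G := by
  obtain ⟨M, hM, hMB⟩ := hB
  have hadj : ∀ i j : Fin 3, K33.Adj (.inl i) (.inr j) := by simp
  let wk : ∀ i j : Fin 3, G.Walk (B.bv (.inl i)) (B.bv (.inr j)) := fun i j => B.link (hadj i j)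
  let N : Finset (Sym2 V) := Finset.univ.filter (fun e => e ∈ M ∧ ∀ v ∈ e, v ∉ B.verts)
  let L : Cfg V := ⟨fun i => B.bv (.inl i), fun j => B.bv (.inr j),
    fun i j => (wk i j).support.tail.dropLast, N.val⟩
  have hfull : ∀ i j, L.full i j = (wk i j).support := fun i j =>
    (support_split (wk i j) (B.link_odd _)).1
  have hev : ∀ i j, Even (L.Q i j).length := fun i j =>
    (support_split (wk i j) (B.link_odd _)).2
  have hnd : ∀ i j, (L.full i j).Nodup := by
    intro i j
    rw [hfull]
    exact (B.link_isPath _).support_nodup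
  have hQf : ∀ i j v, v ∈ L.Q i j → v ∈ L.full i j := fun i j v h => by simp [Cfg.full, h]
  have hQa : ∀ i j v, v ∈ L.Q i j → v ≠ L.a i := by
    rintro i j v h rfl
    have := hnd i j
    simp [Cfg.full, h] at this
  have hQb : ∀ i j v, v ∈ L.Q i j → v ≠ L.b j := by
    rintro i j v h rfl
    have h1 := hnd i j
    rw [Cfg.full, List.nodup_cons, List.nodup_append] at h1
    exact h1.2.2.2 _ h (L.b j) (by simp) rfl
  have hvf : ∀ i j v, v ∈ L.full i j → v ∈ B.verts := by
    intro i j v h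
    rw [hfull] at h
    exact ⟨_, _, hadj i j, h⟩
  have hfv : ∀ v, v ∈ B.verts → ∃ i j, v ∈ L.full i j := by
    rintro v ⟨x, y, h, hv⟩
    rcases x with i | i <;> rcases y with j | j
    · simp at h
    · exact ⟨i, j, by rw [hfull]; exact hv⟩
    · refine ⟨j, i, ?_⟩
      rw [hfull]
      have := B.link_symm (hadj j i)
      have h2 : B.link h = (B.link (hadj j i)).reverse := this
      rw [h2, SimpleGraph.Walk.support_reverse, List.mem_reverse] at hv
      exact hv
    · simp at h
  have hav : ∀ i, L.a i ∈ B.verts := fun i => hvf i 0 _ (by simp [Cfg.full])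
  have hbv : ∀ i, L.b i ∈ B.verts := fun i => hvf 0 i _ (by simp [Cfg.full])
  have haQ : ∀ i k l, L.a i ∉ L.Q k l := by
    intro i k l h
    have h1 := hQf _ _ _ h
    rw [hfull] at h1
    rcases B.link_branch (hadj k l) (.inl i) h1 with h2 | h2
    · simp at h2; subst h2; exact hQa _ _ _ h rfl
    · simp at h2
  have hbQ : ∀ i k l, L.b i ∉ L.Q k l := by
    intro i k l h
    have h1 := hQf _ _ _ h
    rw [hfull] at h1
    rcases B.link_branch (hadj k l) (.inr i) h1 with h2 | h2
    · simp at h2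
    · simp at h2; subst h2; exact hQb _ _ _ h rfl
  have hNv : ∀ v, v ∈ nv L.N → v ∉ B.verts := by
    intro v hv
    obtain ⟨e, he, hve⟩ := mem_nv.1 hv
    have : e ∈ N := he
    simp only [N, Finset.mem_filter] at this
    exact this.2.2 v hve
  have hab : ∀ i j, L.a i ≠ L.b j := fun i j h => by
    have := B.bv_inj h; simp at this
  refine ⟨L, ?_, ?_, hev, ?_⟩
  · rw [Cfg.VT_eq]
    apply sum_nodup
    · rintro (i | j | ⟨i, j⟩ | _) -
      · simp [Cfg.part]
      · simp [Cfg.part]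
      · have := hnd i j
        rw [Cfg.full, List.nodup_cons, List.nodup_append] at this
        simpa [Cfg.part] using this.2.1
      · show (nv N.val).Nodup
        apply sum_nodup N
        · intro e he
          simp only [N, Finset.mem_filter] at he
          have := hM.1 e he.2.1
          induction e with
          | _ a b =>
            have h1 : Sym2.toMultiset s(a, b) = {a, b} := rfl
            rw [h1]
            have : a ≠ b := this.ne
            simp [Multiset.insert_eq_cons, this]
        · intro e he e' he' x hx hx'
          simp only [N, Finset.mem_filter] at he he'
          refine (hM.2.2 x trivial).unique ⟨he.2.1, ?_⟩ ⟨he'.2.1, ?_⟩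
          · exact Sym2.mem_toMultiset.1 hx
          · exact Sym2.mem_toMultiset.1 hx'
    · rintro (i | i | ⟨i, i'⟩ | _) - (j | j | ⟨j, j'⟩ | _) - v h1 h2 <;>
        simp only [Cfg.part, Multiset.mem_singleton, Multiset.mem_coe] at h1 h2
      · have := B.bv_inj (h1.symm.trans h2); simpa using this
      · exact (hab _ _ (h1.symm.trans h2)).elim
      · exact (haQ _ _ _ (h1 ▸ h2)).elim
      · exact (hNv _ h2 (h1 ▸ hav i)).elim
      · exact (hab _ _ (h2.symm.trans h1)).elim
      · have := B.bv_inj (h1.symm.trans h2); simpa using this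
      · exact (hbQ _ _ _ (h1 ▸ h2)).elim
      · exact (hNv _ h2 (h1 ▸ hbv i)).elim
      · exact (haQ _ _ _ (h2 ▸ h1)).elim
      · exact (hbQ _ _ _ (h2 ▸ h1)).elim
      · by_contra hne
        have k1 := hQf _ _ _ h1
        have k2 := hQf _ _ _ h2
        rw [hfull] at k1 k2
        have := (B.link_meet (hadj i i') (hadj j j') (by
          intro h; apply hne; simp at h; simp [h]) v k1 k2).1
        exact this.elim (hQa _ _ _ h1) (hQb _ _ _ h1)
      · exact (hNv _ h2 (hvf _ _ _ (hQf _ _ _ h1))).elim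
      · exact (hNv _ h1 (h2 ▸ hav j)).elim
      · exact (hNv _ h1 (h2 ▸ hbv j)).elim
      · exact (hNv _ h1 (hvf _ _ _ (hQf _ _ _ h2))).elim
      · rfl
  · intro v
    rw [Cfg.VT_eq, Multiset.mem_sum]
    by_cases hv : v ∈ B.verts
    · obtain ⟨i, j, h⟩ := hfv v hv
      rw [Cfg.mem_full] at h
      rcases h with h | h | h
      · exact ⟨.inl i, by simp, by simp [Cfg.part, h]⟩
      · exact ⟨.inr (.inr (.inl (i, j))), by simp, by simpa [Cfg.part] using h⟩
      · exact ⟨.inr (.inl j), by simp, by simp [Cfg.part, h]⟩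
    · refine ⟨.inr (.inr (.inr ())), by simp, ?_⟩
      show v ∈ nv L.N
      obtain ⟨e, ⟨he, hve⟩, -⟩ := hM.2.2 v trivial
      refine mem_nv.2 ⟨e, ?_, hve⟩
      show e ∈ N
      simp only [N, Finset.mem_filter, Finset.mem_univ, true_and]
      refine ⟨he, fun w hw hwB => hv ?_⟩
      obtain ⟨e', ⟨he', ⟨x, y, h, hE⟩, hwe'⟩, -⟩ := hMB w hwB
      have := (hM.2.2 w trivial).unique ⟨he, hw⟩ ⟨he', hwe'⟩
      subst this
      exact ⟨x, y, h, (B.link h).mem_support_of_mem_edges hE hve⟩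
  · intro e he
    rcases Cfg.mem_TE.1 he with ⟨i, j, h⟩ | h
    · rw [hfull, we_support] at h
      exact (wk i j).edges_subset_edgeSet h
    · have : e ∈ N := h
      simp only [N, Finset.mem_filter] at this
      exact hM.1 e this.2.1

end

end K

open K in
theorem statement_3X {V : Type*} [Fintype V] [DecidableEq V] (B : SimpleGraph V)
    (hbip : IsBipartite B) (hbrace : IsBrace B) (hK : ContainsK33 B)
    {c : V} (C : B.Walk c c) (hC : C.IsCycle) (hlen : C.length = 4) :
    ∃ M : Set (Sym2 V), IsPM B M ∧ MConformalCycle B M C ∧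
      ∃ L : Bisubdivision K33 B, L.MConformal M := by
  match C, hC, hlen with
  | .cons (v := x) h1 (.cons (v := y) h2 (.cons (v := z) h3 (.cons h4 .nil))), hC, _ =>
  have hnd := hC.support_nodup
  simp at hnd
  obtain ⟨⟨hxy, hxz, hxc⟩, ⟨hyz, hyc⟩, hzc⟩ := hnd
  have hne : s(c, x) ≠ s(y, z) := by
    intro h
    rw [Sym2.eq_iff] at h
    rcases h with h | h
    · exact hyc h.1.symm
    · exact hzc h.1.symm
  obtain ⟨M0, hM0, hF⟩ := hbrace.2.2 {s(c, x), s(y, z)} (by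
      rintro e (rfl | rfl)
      · exact h1
      · exact h3) (by
      rintro e (rfl | rfl) f (rfl | rfl) hef w hw hw'
      · exact hef rfl
      · rw [Sym2.mem_iff] at hw hw'
        rcases hw with rfl | rfl <;> rcases hw' with rfl | rfl <;> simp_all
      · rw [Sym2.mem_iff] at hw hw'
        rcases hw with rfl | rfl <;> rcases hw' with rfl | rfl <;> simp_all
      · exact hef rfl) (Set.ncard_pair hne).le
  obtain ⟨col, m, E, hm⟩ := exists_env hbip hM0
  obtain ⟨L0, hL0⟩ := hK
  obtain ⟨L1, hL1⟩ := exists_ok L0 hL0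
  obtain ⟨L2, hL2⟩ := Min.exists m hL1
  obtain ⟨col', E', hcol⟩ := exists_col E hL2.ok
  obtain ⟨L, hL, σ, g1, g2⟩ := main E' hL2 hcol (hm _ (hF (by simp))) (hm _ (hF (by simp))) hne
  have hpm := ML_pm hL σ
  refine ⟨{e | e ∈ ML L σ}, hpm, ?_, final hL σ⟩
  intro v hv
  have key : ∀ e, e ∈ ML L σ → v ∈ e →
      e ∈ (SimpleGraph.Walk.cons h1 (.cons h2 (.cons h3 (.cons h4 .nil)))).edges →
      ∃! e, e ∈ {e | e ∈ ML L σ} ∧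
        e ∈ (SimpleGraph.Walk.cons h1 (.cons h2 (.cons h3 (.cons h4 .nil)))).edges ∧ v ∈ e := by
    intro e he hve hC
    refine ⟨e, ⟨he, hC, hve⟩, ?_⟩
    rintro e' ⟨he', -, hve'⟩
    exact (hpm.2.2 v trivial).unique ⟨he', hve'⟩ ⟨he, hve⟩
  simp at hv
  have hv' : v ∈ s(c, x) ∨ v ∈ s(y, z) := by
    simp only [Sym2.mem_iff]; tauto
  rcases hv' with h | h
  · exact key _ g1 h (by simp)
  · exact key _ g2 h (by simp)

end Paper

namespace Paper

open SimpleGraph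

variable {V : Type*} {W : Type*}

/-- in a brace containing `K₃,₃`, for every 4-cycle `C` there is a perfect
matching `M` for which `C` is `M`-conformal and some bisubdivision of `K₃,₃` is
`M`-conformal. -/
theorem statement_3 {V : Type*} [Fintype V] [DecidableEq V] (B : SimpleGraph V)
    (hbip : IsBipartite B) (hbrace : IsBrace B) (hK : ContainsK33 B)
    {c : V} (C : B.Walk c c) (hC : C.IsCycle) (hlen : C.length = 4) :
    ∃ M : Set (Sym2 V), IsPM B M ∧ MConformalCycle B M C ∧
      ∃ L : Bisubdivision K33 B, L.MConformal M := by
  exact statement_3X B hbip hbrace hK C hC hlen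

end Paper
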